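/- arXiv:1812.01413 — 2 statements merged into one kernel-verified Lean document; each statement's English description precedes it below -/
import Mathlib

section
/- Let G(q) be the Monge metric of the Oriented Associativity equation, φ the coordinate change from u- to q-variables, J(u) the Jacobian matrix ∂φ/∂u, Δ(u) = (u¹−u²)(u¹−u³)(u²−u³)u⁵, and let w_{1ij}(u) = W_{1ij}(u)/Δ(u) and w_{2ij}(u) = W_{2ij}(u)/Δ(u) be the two explicit skew-symmetric 6×6 matrices of lowered commuting-flow tensors. On the open set of u ∈ ℝ⁶ where u¹, u², u³ are pairwise distinct, u⁵ ≠ 0, J(u) is invertible and G(φ(u)) is invertible, define g^{sp} := entries of G(φ(u))⁻¹, c_{pij}(q) := (1/3)(∂G_{jp}/∂q^i − ∂G_{ip}/∂q^j), c^s_{ij} := Σ_p g^{sp} c_{pij}(φ(u)), and define the q-derivative of w by w_{αij,l} := Σ_s (∂w_{αij}/∂u^s)(J(u)⁻¹)^s_l. Then for α = 1, 2 and all indices i, j, l ∈ {1,…,6}: w_{αij,l} − Σ_s c^s_{ij} w_{αsl} = 0. -/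
/-- Partial derivative in direction `k` for functions on `ℝ⁶`. -/
noncomputable def pd (k : Fin 6) (f : (Fin 6 → ℝ) → ℝ) (x : Fin 6 → ℝ) : ℝ :=
  fderiv ℝ f x (Pi.single k 1)

/-- The Monge metric `G(q)` of the Oriented Associativity equation
(0-based indices: `q i = qⁱ⁺¹`). -/
def G (q : Fin 6 → ℝ) : Matrix (Fin 6) (Fin 6) ℝ :=
  !![2, 0, q 2, -q 4, 2 * q 3, 0;
     0, 0, 2 * q 4, 0, -q 2 + 2 * q 5, -q 4;
     q 2, 2 * q 4, -2 * (q 0 + q 3 * q 4), q 4 * (q 2 - q 5),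
       -q 1 + q 3 * (q 2 - q 5), 2 * q 3 * q 4;
     -q 4, 0, q 4 * (q 2 - q 5), 2 * (q 4) ^ 2,
       -q 0 + q 2 * (-q 2 + 2 * q 5) - 2 * q 3 * q 4 - (q 5) ^ 2, q 4 * (-q 2 + q 5);
     2 * q 3, -q 2 + 2 * q 5, -q 1 + q 3 * (q 2 - q 5),
       -q 0 + q 2 * (-q 2 + 2 * q 5) - 2 * q 3 * q 4 - (q 5) ^ 2, 2 * (q 3) ^ 2,
       -q 1 + q 3 * (-q 2 + q 5);
     0, -q 4, 2 * q 3 * q 4, q 4 * (-q 2 + q 5), -q 1 + q 3 * (-q 2 + q 5),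
       -2 * q 3 * q 4]

/-- The coordinate change `φ : (u¹,…,u⁶) ↦ (q¹,…,q⁶)` (0-based indices: `x i = uⁱ⁺¹`). -/
noncomputable def phi (x : Fin 6 → ℝ) : Fin 6 → ℝ :=
  let q1 : ℝ := (1 / 4) * (x 0 + x 1 + x 2) ^ 2 - (x 0 * x 1 + x 0 * x 2 + x 1 * x 2)
    - (1 / 4) * (x 5) ^ 2 - x 3 * x 4
  ![q1,
    (2 * x 0 * x 1 * x 2 + (x 0 + x 1 + x 2 - x 5) * q1) / (2 * x 4),
    (1 / 2) * (x 0 + x 1 + x 2 + x 5),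
    x 3,
    x 4,
    (1 / 2) * (x 0 + x 1 + x 2 - x 5)]

/-- The Jacobian matrix `J(u) = ∂φ/∂u`. -/
noncomputable def Jmat (u : Fin 6 → ℝ) : Matrix (Fin 6) (Fin 6) ℝ :=
  Matrix.of fun i j => pd j (fun x => phi x i) u

/-- `Δ(u) = (u¹−u²)(u¹−u³)(u²−u³)u⁵`. -/
def Δ (u : Fin 6 → ℝ) : ℝ := (u 0 - u 1) * (u 0 - u 2) * (u 1 - u 2) * u 4

/-- The first skew-symmetric matrix `W₁(u)` of lowered commuting-flow tensors. -/
noncomputable def W1 (u : Fin 6 → ℝ) : Matrix (Fin 6) (Fin 6) ℝ :=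
  let a13 : ℝ := -(u 1 + u 2 - u 0 - u 5) * (u 1 - u 2) * u 4 / 2
  let a14 : ℝ := (u 1 - u 2) * (u 4) ^ 2
  let a25 : ℝ := -(u 1 + u 2 - u 0 - u 5) * (u 1 - u 2) * u 4 / 2
  let a26 : ℝ := (u 1 - u 2) * (u 4) ^ 2
  let a34 : ℝ := (u 1 - u 2) * (u 4) ^ 2 * u 0
  let a35 : ℝ := -(4 * u 3 * u 4 + (u 5) ^ 2 - 2 * u 5 * u 0 + (u 0) ^ 2 - (u 1) ^ 2
      + 2 * u 1 * u 2 - (u 2) ^ 2) * (u 5 + u 0 - u 1 - u 2) * (u 1 - u 2) / 8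
  let a45 : ℝ := -(4 * u 3 * u 4 + (u 5) ^ 2 - 4 * u 5 * u 0 - (u 0) ^ 2 + 2 * u 0 * u 1
      + 2 * u 0 * u 2 - (u 1) ^ 2 + 2 * u 1 * u 2 - (u 2) ^ 2) * (u 1 - u 2) * u 4 / 4
  let a46 : ℝ := (u 1 - u 2) * (u 4) ^ 2 * u 0
  let a56 : ℝ := -(4 * u 3 * u 4 + (u 5) ^ 2 - 2 * u 5 * u 0 + (u 0) ^ 2 - (u 1) ^ 2
      + 2 * u 1 * u 2 - (u 2) ^ 2) * (u 5 + u 0 - u 1 - u 2) * (u 1 - u 2) / 8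
  !![0, 0, a13, a14, 0, 0;
     0, 0, 0, 0, a25, a26;
     -a13, 0, 0, a34, a35, 0;
     -a14, 0, -a34, 0, a45, a46;
     0, -a25, -a35, -a45, 0, a56;
     0, -a26, 0, -a46, -a56, 0]

/-- The second skew-symmetric matrix `W₂(u)` of lowered commuting-flow tensors. -/
noncomputable def W2 (u : Fin 6 → ℝ) : Matrix (Fin 6) (Fin 6) ℝ :=
  let a13 : ℝ := -(u 5 - u 0 + u 1 - u 2) * (u 0 - u 2) * u 4 / 2
  let a14 : ℝ := -(u 0 - u 2) * (u 4) ^ 2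
  let a25 : ℝ := -(u 5 - u 0 + u 1 - u 2) * (u 0 - u 2) * u 4 / 2
  let a26 : ℝ := -(u 0 - u 2) * (u 4) ^ 2
  let a34 : ℝ := -(u 0 - u 2) * (u 4) ^ 2 * u 1
  let a35 : ℝ := (4 * u 3 * u 4 + (u 5) ^ 2 - 2 * u 5 * u 1 - (u 0) ^ 2 + 2 * u 0 * u 2
      + (u 1) ^ 2 - (u 2) ^ 2) * (u 5 - u 0 + u 1 - u 2) * (u 0 - u 2) / 8
  let a45 : ℝ := -((u 1 - u 2) ^ 2 + (u 0) ^ 2 - 2 * (u 1 + u 2) * u 0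
      - (u 5 - 4 * u 1) * u 5 - 4 * u 3 * u 4) * (u 0 - u 2) * u 4 / 4
  let a46 : ℝ := -(u 0 - u 2) * (u 4) ^ 2 * u 1
  let a56 : ℝ := (4 * u 3 * u 4 + (u 5) ^ 2 - 2 * u 5 * u 1 - (u 0) ^ 2 + 2 * u 0 * u 2
      + (u 1) ^ 2 - (u 2) ^ 2) * (u 5 - u 0 + u 1 - u 2) * (u 0 - u 2) / 8
  !![0, 0, a13, a14, 0, 0;
     0, 0, 0, 0, a25, a26;
     -a13, 0, 0, a34, a35, 0;
     -a14, 0, -a34, 0, a45, a46;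
     0, -a25, -a35, -a45, 0, a56;
     0, -a26, 0, -a46, -a56, 0]

/-- The pair of matrices `W₁, W₂`. -/
noncomputable def Wmat : Fin 2 → (Fin 6 → ℝ) → Matrix (Fin 6) (Fin 6) ℝ := ![W1, W2]

/-- The lowered symbols `c_{pij}(q) = (1/3)(∂G_{jp}/∂q^i − ∂G_{ip}/∂q^j)`. -/
noncomputable def cLow (p i j : Fin 6) (q : Fin 6 → ℝ) : ℝ :=
  (1 / 3) * (pd i (fun x => G x j p) q - pd j (fun x => G x i p) q)

set_option linter.unusedSimpArgs false

/-- `f` has gradient `g` at `u`. -/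
def HasGrad (f : (Fin 6 → ℝ) → ℝ) (g : Fin 6 → ℝ) (u : Fin 6 → ℝ) : Prop :=
  DifferentiableAt ℝ f u ∧ ∀ k, pd k f u = g k

theorem HasGrad.const (c : ℝ) (u) : HasGrad (fun _ => c) (fun _ => 0) u := by
  refine ⟨by fun_prop, fun k => ?_⟩
  simp [pd]

theorem HasGrad.coord (i : Fin 6) (u) :
    HasGrad (fun x => x i) (fun k => if i = k then 1 else 0) u := by
  refine ⟨by fun_prop, fun k => ?_⟩
  have h : HasFDerivAt (fun x : Fin 6 → ℝ => x i)
    (ContinuousLinearMap.proj (R := ℝ) (φ := fun _ : Fin 6 => ℝ) i) u :=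
    (ContinuousLinearMap.proj (R := ℝ) (φ := fun _ : Fin 6 => ℝ) i).hasFDerivAt
  rw [pd, h.fderiv]
  simp [Pi.single_apply]

theorem HasGrad.add {f f' g g' u} (hf : HasGrad f g u) (hf' : HasGrad f' g' u) :
    HasGrad (fun x => f x + f' x) (fun k => g k + g' k) u := by
  refine ⟨hf.1.add hf'.1, fun k => ?_⟩
  beta_reduce
  rw [← hf.2, ← hf'.2]
  change fderiv ℝ (f + f') u _ = _
  rw [(hf.1.hasFDerivAt.add hf'.1.hasFDerivAt).fderiv]
  rfl

theorem HasGrad.sub {f f' g g' u} (hf : HasGrad f g u) (hf' : HasGrad f' g' u) :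
    HasGrad (fun x => f x - f' x) (fun k => g k - g' k) u := by
  refine ⟨hf.1.sub hf'.1, fun k => ?_⟩
  beta_reduce
  rw [← hf.2, ← hf'.2]
  change fderiv ℝ (f - f') u _ = _
  rw [(hf.1.hasFDerivAt.sub hf'.1.hasFDerivAt).fderiv]
  rfl

theorem HasGrad.neg {f g u} (hf : HasGrad f g u) :
    HasGrad (fun x => - f x) (fun k => - g k) u := by
  refine ⟨hf.1.neg, fun k => ?_⟩
  beta_reduce
  rw [← hf.2]
  change fderiv ℝ (-f) u _ = _
  rw [(hf.1.hasFDerivAt.neg).fderiv]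
  rfl

theorem HasGrad.mul {f f' g g' u} (hf : HasGrad f g u) (hf' : HasGrad f' g' u) :
    HasGrad (fun x => f x * f' x) (fun k => f u * g' k + f' u * g k) u := by
  refine ⟨hf.1.mul hf'.1, fun k => ?_⟩
  beta_reduce
  rw [← hf.2, ← hf'.2]
  change fderiv ℝ (f * f') u _ = _
  rw [(hf.1.hasFDerivAt.mul hf'.1.hasFDerivAt).fderiv]
  simp [pd]

theorem HasGrad.sq {f g u} (hf : HasGrad f g u) :
    HasGrad (fun x => f x ^ 2) (fun k => 2 * f u * g k) u := by
  have h := hf.mul hf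
  have e : (fun x => f x ^ 2) = fun x => f x * f x := by funext x; ring
  rw [e]
  refine ⟨h.1, fun k => ?_⟩
  rw [h.2]; ring

theorem HasGrad.inv {f g u} (hf : HasGrad f g u) (h0 : f u ≠ 0) :
    HasGrad (fun x => (f x)⁻¹) (fun k => - g k / f u ^ 2) u := by
  refine ⟨hf.1.inv h0, fun k => ?_⟩
  have h := (hasDerivAt_inv h0).comp_hasFDerivAt u hf.1.hasFDerivAt
  have e : (fun x => (f x)⁻¹) = Inv.inv ∘ f := rfl
  beta_reduce
  rw [e, pd, ← hf.2]
  change fderiv ℝ ((fun y => y⁻¹) ∘ f) u _ = _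
  rw [h.fderiv]
  simp [pd]
  ring

theorem HasGrad.div {f f' g g' u} (hf : HasGrad f g u) (hf' : HasGrad f' g' u) (h0 : f' u ≠ 0) :
    HasGrad (fun x => f x / f' x) (fun k => (g k * f' u - f u * g' k) / f' u ^ 2) u := by
  have h := hf.mul (hf'.inv h0)
  have e : (fun x => f x / f' x) = fun x => f x * (f' x)⁻¹ := by
    funext x; rw [div_eq_mul_inv]
  rw [e]
  refine ⟨h.1, fun k => ?_⟩
  rw [h.2]; field_simp; ring

theorem HasGrad.congr {f g g' u} (hf : HasGrad f g u) (h : ∀ k, g k = g' k) : HasGrad f g' u :=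
  ⟨hf.1, fun k => (hf.2 k).trans (h k)⟩

theorem HasGrad.congr_fun {f f' g u} (hf : HasGrad f g u)
    (h : f' =ᶠ[nhds u] f) : HasGrad f' g u := by
  refine ⟨hf.1.congr_of_eventuallyEq h, fun k => ?_⟩
  rw [← hf.2, pd, pd, h.fderiv_eq]

/-- explicit derivatives of the metric -/
def dG (q : Fin 6 → ℝ) (k : Fin 6) : Matrix (Fin 6) (Fin 6) ℝ :=
  ![!![0,0,0,0,0,0; 0,0,0,0,0,0; 0,0,-2,0,0,0; 0,0,0,0,-1,0; 0,0,0,-1,0,0; 0,0,0,0,0,0],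
    !![0,0,0,0,0,0; 0,0,0,0,0,0; 0,0,0,0,-1,0; 0,0,0,0,0,0; 0,0,-1,0,0,-1; 0,0,0,0,-1,0],
    !![0,0,1,0,0,0; 0,0,0,0,-1,0; 1,0,0,q 4,q 3,0; 0,0,q 4,0,-2*q 2+2*q 5,-q 4;
       0,-1,q 3,-2*q 2+2*q 5,0,-q 3; 0,0,0,-q 4,-q 3,0],
    !![0,0,0,0,2,0; 0,0,0,0,0,0; 0,0,-2*q 4,0,q 2-q 5,2*q 4; 0,0,0,0,-2*q 4,0;
       2,0,q 2-q 5,-2*q 4,4*q 3,-q 2+q 5; 0,0,2*q 4,0,-q 2+q 5,-2*q 4],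
    !![0,0,0,-1,0,0; 0,0,2,0,0,-1; 0,2,-2*q 3,q 2-q 5,0,2*q 3; -1,0,q 2-q 5,4*q 4,-2*q 3,-q 2+q 5;
       0,0,0,-2*q 3,0,0; 0,-1,2*q 3,-q 2+q 5,0,-2*q 3],
    !![0,0,0,0,0,0; 0,0,0,0,2,0; 0,0,0,-q 4,-q 3,0; 0,0,-q 4,0,2*q 2-2*q 5,q 4;
       0,2,-q 3,2*q 2-2*q 5,0,q 3; 0,0,0,q 4,q 3,0]] k

set_option maxHeartbeats 4000000 in
theorem hasGrad_G (q : Fin 6 → ℝ) (i j : Fin 6) :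
    HasGrad (fun x => G x i j) (fun k => dG q k i j) q := by
  fin_cases i <;> fin_cases j <;>
  · simp only [G, Matrix.of_apply, Matrix.cons_val', Matrix.cons_val, Fin.zero_eta, Fin.mk_one,
      Fin.reduceFinMk, Matrix.cons_val_zero, Matrix.cons_val_one, Matrix.cons_val_fin_one, Fin.isValue]
    refine HasGrad.congr (by
      repeat' first
        | exact HasGrad.const _ _
        | exact HasGrad.coord _ _
        | apply HasGrad.div
        | apply HasGrad.sub
        | apply HasGrad.add
        | apply HasGrad.neg
        | apply HasGrad.sq
        | apply HasGrad.mul) ?_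
    intro k
    fin_cases k <;> simp [dG] <;> ring

theorem cLow_eq (p i j : Fin 6) (q : Fin 6 → ℝ) :
    cLow p i j q = (1 / 3) * (dG q i j p - dG q j i p) := by
  rw [cLow, (hasGrad_G q j p).2, (hasGrad_G q i p).2]

/-- explicit Jacobian -/
noncomputable def Jc (a b c d e f : ℝ) : Matrix (Fin 6) (Fin 6) ℝ :=
  let Q : ℝ := (1 / 4) * (a + b + c) ^ 2 - (a * b + a * c + b * c) - (1 / 4) * f ^ 2 - d * e
  let S : ℝ := a + b + c - f
  !![(a - b - c) / 2, (b - a - c) / 2, (c - a - b) / 2, -e, -d, -f / 2;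
     (2 * b * c + Q + S * (a - b - c) / 2) / (2 * e),
       (2 * a * c + Q + S * (b - a - c) / 2) / (2 * e),
       (2 * a * b + Q + S * (c - a - b) / 2) / (2 * e),
       -S / 2, - (S * d) / (2 * e) - (2 * a * b * c + S * Q) / (2 * e ^ 2),
       (-Q - S * f / 2) / (2 * e);
     1 / 2, 1 / 2, 1 / 2, 0, 0, 1 / 2;
     0, 0, 0, 1, 0, 0;
     0, 0, 0, 0, 1, 0;
     1 / 2, 1 / 2, 1 / 2, 0, 0, -1 / 2]

set_option maxHeartbeats 4000000 in
theorem hasGrad_phi (u : Fin 6 → ℝ) (h4 : u 4 ≠ 0) (i : Fin 6) : HasGrad (fun x => phi x i)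
      (fun k => Jc (u 0) (u 1) (u 2) (u 3) (u 4) (u 5) i k) u := by
    fin_cases i <;>
    · simp only [phi, Matrix.of_apply, Matrix.cons_val', Matrix.cons_val, Fin.zero_eta, Fin.mk_one,
        Fin.reduceFinMk, Matrix.cons_val_zero, Matrix.cons_val_one, Matrix.cons_val_fin_one,
        Fin.isValue]
      refine HasGrad.congr (by
        repeat' first
          | exact HasGrad.const _ _
          | exact HasGrad.coord _ _
          | apply HasGrad.div
          | apply HasGrad.sub
          | apply HasGrad.add
          | apply HasGrad.neg
          | apply HasGrad.sq
          | apply HasGrad.mul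
          | exact mul_ne_zero two_ne_zero h4) ?_
      intro k
      fin_cases k <;> simp [Jc] <;> field_simp <;> ring

theorem Jmat_eq (u : Fin 6 → ℝ) (h4 : u 4 ≠ 0) :
    Jmat u = Jc (u 0) (u 1) (u 2) (u 3) (u 4) (u 5) := by
  ext i k
  exact (hasGrad_phi u h4 i).2 k

/-- simplified lowered tensor -/
noncomputable def wc (a b c d e f : ℝ) : Matrix (Fin 6) (Fin 6) ℝ :=
  let a13 : ℝ := -(b + c - a - f) / (2 * ((a - b) * (a - c)))
  let a14 : ℝ := e / ((a - b) * (a - c))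
  let a34 : ℝ := (e * a) / ((a - b) * (a - c))
  let a35 : ℝ := (-(4 * d * e + f ^ 2 - 2 * f * a + a ^ 2 - b ^ 2 + 2 * b * c - c ^ 2)
      * (f + a - b - c)) / (8 * ((a - b) * (a - c) * e))
  let a45 : ℝ := -(4 * d * e + f ^ 2 - 4 * f * a - a ^ 2 + 2 * a * b
      + 2 * a * c - b ^ 2 + 2 * b * c - c ^ 2) / (4 * ((a - b) * (a - c)))
  !![0, 0, a13, a14, 0, 0;
     0, 0, 0, 0, a13, a14;
     -a13, 0, 0, a34, a35, 0;
     -a14, 0, -a34, 0, a45, a34;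
     0, -a13, -a35, -a45, 0, a35;
     0, -a14, 0, -a34, -a35, 0]

set_option linter.unusedVariables false

/-- row 0 of `G⁻¹ w J` -/
noncomputable def Yr0 (a b c d e f : ℝ) : Fin 6 → ℝ :=
  ![(- a^2*b - a^2*c + 2*a*b^2 + 2*a*b*c + 2*a*c^2 - 8*a*d*e - 2*a*f^2 - b^3 - b^2*c - b*c^2 + 4*b*d*e + b*f^2 - c^3 + 4*c*d*e + c*f^2) / (4*(a - b)^2*(a - c)^2),
       (a^2 - 2*a*b + b^2 - c^2 + 4*d*e + f^2) / (4*(a - b)^2*(a - c)),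
       (a^2 - 2*a*c - b^2 + c^2 + 4*d*e + f^2) / (4*(a - b)*(a - c)^2),
       (e) / ((a - b)*(a - c)),
       (d) / ((a - b)*(a - c)),
       (f) / (2*(a - b)*(a - c))]

/-- row 1 of `G⁻¹ w J` -/
noncomputable def Yr1 (a b c d e f : ℝ) : Fin 6 → ℝ :=
  ![(a^4 - 2*a^3*b - 2*a^3*c + 2*a^2*b^2 + 3*a^2*b*c + a^2*b*f + 2*a^2*c^2 + a^2*c*f - 12*a^2*d*e - 3*a^2*f^2 - 2*a*b^3 - 2*a*b^2*f - 2*a*b*c*f + 8*a*b*d*e + 2*a*b*f^2 - 2*a*c^3 - 2*a*c^2*f + 8*a*c*d*e + 2*a*c*f^2 + 8*a*d*e*f + 2*a*f^3 + b^4 - b^3*c + b^3*f + b^2*c*f - 4*b^2*d*e - b^2*f^2 - b*c^3 + b*c^2*f + 4*b*c*d*e + b*c*f^2 - 4*b*d*e*f - b*f^3 + c^4 + c^3*f - 4*c^2*d*e - c^2*f^2 - 4*c*d*e*f - c*f^3) / (8*(a - b)^2*(a - c)^2*e),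
       (- 2*a^2*b + a^2*c - a^2*f + 4*a*b^2 - 2*a*b*c + 2*a*b*f - 2*a*c^2 + 8*a*d*e + 2*a*f^2 - 2*b^3 + b^2*c - b^2*f + c^3 + c^2*f - 4*c*d*e - c*f^2 - 4*d*e*f - f^3) / (8*(a - b)^2*(a - c)*e),
       (a^2*b - 2*a^2*c - a^2*f - 2*a*b^2 - 2*a*b*c + 4*a*c^2 + 2*a*c*f + 8*a*d*e + 2*a*f^2 + b^3 + b^2*f + b*c^2 - 4*b*d*e - b*f^2 - 2*c^3 - c^2*f - 4*d*e*f - f^3) / (8*(a - b)*(a - c)^2*e),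
       (a - b - c - f) / (2*(a - b)*(a - c)),
       (- a^3 + a^2*b + a^2*c + a^2*f + a*b^2 - 2*a*b*c - 2*a*b*f + a*c^2 - 2*a*c*f + 8*a*d*e + a*f^2 - b^3 + b^2*c + b^2*f + b*c^2 - 2*b*c*f + b*f^2 - c^3 + c^2*f + c*f^2 - 8*d*e*f - f^3) / (8*(a - b)*(a - c)*e^2),
       (- a^2 + 2*a*b + 2*a*c + 2*a*f - b^2 + 2*b*c - 2*b*f - c^2 - 2*c*f + 4*d*e - f^2) / (8*(a - b)*(a - c)*e)]

/-- row 2 of `G⁻¹ w J` -/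
noncomputable def Yr2 (a b c d e f : ℝ) : Fin 6 → ℝ :=
  ![(a^2 - 2*a*b - 2*a*c + 2*a*f + b^2 + b*c - b*f + c^2 - c*f) / (2*(a - b)^2*(a - c)^2),
       (c - f) / (2*(a - b)^2*(a - c)),
       (b - f) / (2*(a - b)*(a - c)^2),
       0,
       0,
       (- 1) / (2*(a - b)*(a - c))]

/-- row 3 of `G⁻¹ w J` -/
noncomputable def Yr3 (a b c d e f : ℝ) : Fin 6 → ℝ :=
  ![(- a^2*b - a^2*c + 2*a^2*f + 2*a*b^2 - 2*a*b*c + 2*a*c^2 - 2*a*f^2 - b^3 + b^2*c + b*c^2 - 2*b*c*f + b*f^2 - c^3 + c*f^2) / (4*(a - b)^2*(a - c)^2*e),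
       (a^2 - 2*a*b + 2*a*c - 2*a*f + b^2 - c^2 + f^2) / (4*(a - b)^2*(a - c)*e),
       (a^2 + 2*a*b - 2*a*c - 2*a*f - b^2 + c^2 + f^2) / (4*(a - b)*(a - c)^2*e),
       (1) / ((a - b)*(a - c)),
       0,
       (- a + f) / (2*(a - b)*(a - c)*e)]

/-- row 4 of `G⁻¹ w J` -/
noncomputable def Yr4 (a b c d e f : ℝ) : Fin 6 → ℝ :=
  ![(2*a*e - b*e - c*e) / ((a - b)^2*(a - c)^2),
       (- e) / ((a - b)^2*(a - c)),
       (- e) / ((a - b)*(a - c)^2),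
       0,
       (- 1) / ((a - b)*(a - c)),
       0]

/-- row 5 of `G⁻¹ w J` -/
noncomputable def Yr5 (a b c d e f : ℝ) : Fin 6 → ℝ :=
  ![(3*a^2 - 2*a*b - 2*a*c - 2*a*f + b^2 - b*c + b*f + c^2 + c*f) / (2*(a - b)^2*(a - c)^2),
       (- 2*a + c + f) / (2*(a - b)^2*(a - c)),
       (- 2*a + b + f) / (2*(a - b)*(a - c)^2),
       0,
       (- a + f) / ((a - b)*(a - c)*e),
       (- 1) / (2*(a - b)*(a - c))]

/-- the matrix `G⁻¹ w J` -/
noncomputable def Yc (a b c d e f : ℝ) : Matrix (Fin 6) (Fin 6) ℝ :=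
  Matrix.of ![Yr0 a b c d e f, Yr1 a b c d e f, Yr2 a b c d e f, Yr3 a b c d e f, Yr4 a b c d e f, Yr5 a b c d e f]
-- SPLIT
theorem wc_eq1 (x : Fin 6 → ℝ) (h : (x 0 ≠ x 1 ∧ x 0 ≠ x 2 ∧ x 1 ≠ x 2)) (h4 : x 4 ≠ 0)
    (i j : Fin 6) :
    W1 x i j / Δ x = wc (x 0) (x 1) (x 2) (x 3) (x 4) (x 5) i j := by
  obtain ⟨h1, h2, h3⟩ := h
  have h1 := sub_ne_zero.2 h1
  have h2 := sub_ne_zero.2 h2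
  have h3 := sub_ne_zero.2 h3
  fin_cases i <;> fin_cases j <;> simp [W1, wc, Δ] <;> field_simp

theorem wc_eq2 (x : Fin 6 → ℝ) (h : (x 0 ≠ x 1 ∧ x 0 ≠ x 2 ∧ x 1 ≠ x 2)) (h4 : x 4 ≠ 0)
    (i j : Fin 6) :
    W2 x i j / Δ x = wc (x 1) (x 0) (x 2) (x 3) (x 4) (x 5) i j := by
  obtain ⟨h1, h2, h3⟩ := h
  have h1' := sub_ne_zero.2 h1.symm
  have h1 := sub_ne_zero.2 h1
  have h2 := sub_ne_zero.2 h2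
  have h3 := sub_ne_zero.2 h3
  fin_cases i <;> fin_cases j <;> simp [W2, wc, Δ] <;> field_simp <;> ring

-- SPLIT2
set_option maxHeartbeats 4000000 in
theorem GY (u : Fin 6 → ℝ) (h1 : u 0 - u 1 ≠ 0) (h2 : u 0 - u 2 ≠ 0) (h4 : u 4 ≠ 0) :
    G (phi u) * Yc (u 0) (u 1) (u 2) (u 3) (u 4) (u 5)
      = wc (u 0) (u 1) (u 2) (u 3) (u 4) (u 5) * Jc (u 0) (u 1) (u 2) (u 3) (u 4) (u 5) := by
  ext i j
  rw [Matrix.mul_apply, Matrix.mul_apply, Fin.sum_univ_six, Fin.sum_univ_six]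
  generalize hp : phi u = q
  have q0 : q 0 = (1 / 4) * (u 0 + u 1 + u 2) ^ 2 - (u 0 * u 1 + u 0 * u 2 + u 1 * u 2)
    - (1 / 4) * (u 5) ^ 2 - u 3 * u 4 := by rw [← hp]; rfl
  have q1 : q 1 = (2 * u 0 * u 1 * u 2 + (u 0 + u 1 + u 2 - u 5) * q 0) / (2 * u 4) := by
    rw [← hp]; rfl
  have q2 : q 2 = (1 / 2) * (u 0 + u 1 + u 2 + u 5) := by rw [← hp]; rfl
  have q3 : q 3 = u 3 := by rw [← hp]; rfl
  have q4 : q 4 = u 4 := by rw [← hp]; rfl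
  have q5 : q 5 = (1 / 2) * (u 0 + u 1 + u 2 - u 5) := by rw [← hp]; rfl
  clear hp
  generalize u 0 = a at *
  generalize u 1 = b at *
  generalize u 2 = c at *
  generalize u 3 = d at *
  generalize u 4 = e at *
  generalize u 5 = f at *
  fin_cases i <;> fin_cases j <;> simp [G, Yc, Yr0, Yr1, Yr2, Yr3, Yr4, Yr5, wc, Jc, q1, q0, q2, q3, q4, q5] <;> field_simp <;> ring

set_option maxHeartbeats 8000000 in
theorem hasGrad_w_lt (u : Fin 6 → ℝ) (h1 : u 0 - u 1 ≠ 0) (h2 : u 0 - u 2 ≠ 0) (h4 : u 4 ≠ 0)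
    (i j : Fin 6) (hij : i < j) :
    HasGrad (fun x => wc (x 0) (x 1) (x 2) (x 3) (x 4) (x 5) i j)
      (fun k => ∑ p, cLow p i j (phi u) * Yc (u 0) (u 1) (u 2) (u 3) (u 4) (u 5) p k) u := by
  have q0 : phi u 0 = (1 / 4) * (u 0 + u 1 + u 2) ^ 2 - (u 0 * u 1 + u 0 * u 2 + u 1 * u 2)
    - (1 / 4) * (u 5) ^ 2 - u 3 * u 4 := by rfl
  have q2 : phi u 2 = (1 / 2) * (u 0 + u 1 + u 2 + u 5) := by rfl
  have q3 : phi u 3 = u 3 := by rfl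
  have q4 : phi u 4 = u 4 := by rfl
  have q5 : phi u 5 = (1 / 2) * (u 0 + u 1 + u 2 - u 5) := by rfl
  have e1 : u 0 - u 1 ≠ 0 := h1
  have hE : (u 0 - u 1) * (u 0 - u 2) ≠ 0 := mul_ne_zero h1 h2
  have hE2 : 2 * ((u 0 - u 1) * (u 0 - u 2)) ≠ 0 := mul_ne_zero two_ne_zero hE
  have hE4 : 4 * ((u 0 - u 1) * (u 0 - u 2)) ≠ 0 := mul_ne_zero four_ne_zero hE
  have hE8 : 8 * ((u 0 - u 1) * (u 0 - u 2) * u 4) ≠ 0 :=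
    mul_ne_zero (by norm_num) (mul_ne_zero hE h4)
  fin_cases i <;> fin_cases j <;> first | (exact absurd hij (by decide)) | skip
  all_goals
    clear hij
    simp only [wc, Matrix.of_apply, Matrix.cons_val', Matrix.cons_val, Fin.zero_eta, Fin.mk_one,
        Fin.reduceFinMk, Matrix.cons_val_zero, Matrix.cons_val_one, Matrix.cons_val_fin_one,
        Fin.isValue]
    refine HasGrad.congr (by
        repeat' first
          | exact HasGrad.const _ _
          | exact HasGrad.coord _ _
          | apply HasGrad.div
          | apply HasGrad.sub
          | apply HasGrad.add
          | apply HasGrad.neg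
          | apply HasGrad.sq
          | apply HasGrad.mul
          | assumption) ?_
    intro k
    rw [Fin.sum_univ_six]
    simp only [cLow_eq]
    simp [dG, Yc, q2, q3, q4, q5] <;> fin_cases k <;> simp [Yr0, Yr1, Yr2, Yr3, Yr4, Yr5] <;> field_simp <;> ring

theorem cLow_skew (p i j : Fin 6) (q : Fin 6 → ℝ) : cLow p j i q = - cLow p i j q := by
  unfold cLow; ring

theorem wc_skew (a b c d e f : ℝ) (i j : Fin 6) : wc a b c d e f j i = - wc a b c d e f i j := by
  fin_cases i <;> fin_cases j <;> simp [wc]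

theorem hasGrad_w (u : Fin 6 → ℝ) (h1 : u 0 - u 1 ≠ 0) (h2 : u 0 - u 2 ≠ 0) (h4 : u 4 ≠ 0)
    (i j : Fin 6) :
    HasGrad (fun x => wc (x 0) (x 1) (x 2) (x 3) (x 4) (x 5) i j)
      (fun k => ∑ p, cLow p i j (phi u) * Yc (u 0) (u 1) (u 2) (u 3) (u 4) (u 5) p k) u := by
  rcases lt_trichotomy i j with h | h | h
  · exact hasGrad_w_lt u h1 h2 h4 i j h
  · subst h
    have e1 : ∀ p, cLow p i i (phi u) = 0 := fun p => by
      have := cLow_skew p i i (phi u); linarith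
    have e2 : ∀ x : Fin 6 → ℝ, wc (x 0) (x 1) (x 2) (x 3) (x 4) (x 5) i i = 0 := fun x => by
      have := wc_skew (x 0) (x 1) (x 2) (x 3) (x 4) (x 5) i i; linarith
    simp only [e1, e2, zero_mul, Finset.sum_const_zero]
    exact HasGrad.const _ _
  · have g := (hasGrad_w_lt u h1 h2 h4 j i h).neg
    simp only [← wc_skew, ← Finset.sum_neg_distrib, ← neg_mul, ← cLow_skew] at g
    exact g

theorem reduction (Gm w J Y : Matrix (Fin 6) (Fin 6) ℝ) (c D : Fin 6 → ℝ)
    (hG : IsUnit Gm.det) (hJ : IsUnit J.det) (hs : Gm.transpose = Gm)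
    (hY : Gm * Y = w * J) (hD : ∀ k, D k = ∑ p, c p * Y p k) (l : Fin 6) :
    (∑ s, D s * J⁻¹ s l) - ∑ s, (∑ p, Gm⁻¹ s p * c p) * w s l = 0 := by
  have hY' : Y * J⁻¹ = Gm⁻¹ * w := by
    have : Y = Gm⁻¹ * (w * J) := by
      rw [← hY, ← Matrix.mul_assoc, Matrix.nonsing_inv_mul _ hG, Matrix.one_mul]
    rw [this, ← Matrix.mul_assoc, Matrix.mul_assoc, Matrix.mul_nonsing_inv _ hJ, Matrix.mul_one]
  have hs' : ∀ s p, Gm⁻¹ s p = Gm⁻¹ p s := by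
    intro s p
    have := Matrix.transpose_nonsing_inv Gm
    rw [hs] at this
    exact (congrFun (congrFun this p) s)
  have hv : D = Matrix.vecMul c Y := by
    funext k; rw [hD]; rfl
  have hc : (fun s => ∑ p, Gm⁻¹ s p * c p) = Matrix.vecMul c Gm⁻¹ := by
    funext s
    simp only [Matrix.vecMul, dotProduct]
    exact Finset.sum_congr rfl fun p _ => by rw [hs' s p, mul_comm]
  have a1 : (∑ s, D s * J⁻¹ s l) = Matrix.vecMul D J⁻¹ l := rfl
  have a2 : (∑ s, (∑ p, Gm⁻¹ s p * c p) * w s l)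
      = Matrix.vecMul (fun s => ∑ p, Gm⁻¹ s p * c p) w l := rfl
  rw [a1, a2, hc, hv, Matrix.vecMul_vecMul, Matrix.vecMul_vecMul, hY', sub_self]

theorem G_symm (q : Fin 6 → ℝ) : (G q).transpose = G q := by
  ext i j
  fin_cases i <;> fin_cases j <;> simp [G]

/-- swap of the first two coordinates -/
def sw : Equiv.Perm (Fin 6) := Equiv.swap 0 1

theorem phi_sw (u : Fin 6 → ℝ) : phi (u ∘ sw) = phi u := by
  have s0 : sw 0 = 1 := by decide
  have s1 : sw 1 = 0 := by decide
  have s2 : sw 2 = 2 := by decide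
  have s3 : sw 3 = 3 := by decide
  have s4 : sw 4 = 4 := by decide
  have s5 : sw 5 = 5 := by decide
  funext i
  fin_cases i <;> simp [phi, s0, s1, s2, s3, s4, s5] <;> ring

theorem HasGrad.sw {f g u} (h : HasGrad f g (u ∘ sw)) :
    HasGrad (fun x => f (x ∘ sw)) (fun k => g (sw k)) u := by
  let L : (Fin 6 → ℝ) →L[ℝ] (Fin 6 → ℝ) :=
    ContinuousLinearMap.pi fun i => ContinuousLinearMap.proj (_root_.sw i)
  have hL : ∀ x, L x = x ∘ _root_.sw := fun x => rfl
  have hc : HasFDerivAt (f ∘ L) ((fderiv ℝ f (L u)).comp L) u :=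
    HasFDerivAt.comp u (h.1.hasFDerivAt : HasFDerivAt f _ (L u)) L.hasFDerivAt
  have e : (fun x => f (x ∘ _root_.sw)) = f ∘ L := rfl
  rw [e]
  refine ⟨hc.differentiableAt, fun k => ?_⟩
  beta_reduce
  rw [pd, hc.fderiv, ← h.2, pd, ContinuousLinearMap.comp_apply]
  congr 1
  funext i
  rw [hL]
  have : _root_.sw i = k ↔ i = _root_.sw k := by
    rw [_root_.sw, Equiv.swap_apply_eq_iff]
  simp [Pi.single_apply, this]

theorem good_nhds (u : Fin 6 → ℝ) (h : (u 0 ≠ u 1 ∧ u 0 ≠ u 2 ∧ u 1 ≠ u 2)) (h4 : u 4 ≠ 0) :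
    ∀ᶠ x in nhds u, (x 0 ≠ x 1 ∧ x 0 ≠ x 2 ∧ x 1 ≠ x 2) ∧ x 4 ≠ 0 := by
  have c : ∀ i : Fin 6, ContinuousAt (fun x : Fin 6 → ℝ => x i) u := fun i =>
    (continuous_apply i).continuousAt
  have n : ∀ i j : Fin 6, u i ≠ u j → ∀ᶠ x in nhds u, x i ≠ x j := fun i j hij =>
    ((c i).ne_iff_eventually_ne (c j)).1 hij
  have n4 : ∀ᶠ x in nhds u, x 4 ≠ 0 := (c 4).eventually_ne h4
  filter_upwards [n _ _ h.1, n _ _ h.2.1, n _ _ h.2.2, n4] with x a b c d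
  exact ⟨⟨a, b, c⟩, d⟩

/-- the lowered commuting-flow tensors `w_{αij} = W_{αij}/Δ` satisfy
`w_{αij,l} − Σ_s c^s_{ij} w_{αsl} = 0`, where the `q`-derivative is computed through the
inverse Jacobian of the coordinate change `φ` and `c^s_{ij} = Σ_p g^{sp} c_{pij}(φ(u))`
with `g = G(φ(u))⁻¹`. -/
theorem statement14 :
    ∀ u : Fin 6 → ℝ,
      (u 0 ≠ u 1 ∧ u 0 ≠ u 2 ∧ u 1 ≠ u 2) → u 4 ≠ 0 →
      IsUnit (Jmat u).det → IsUnit (G (phi u)).det →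
      ∀ (α : Fin 2) (i j l : Fin 6),
        (∑ s, pd s (fun x => Wmat α x i j / Δ x) u * (Jmat u)⁻¹ s l)
          - ∑ s, (∑ p, (G (phi u))⁻¹ s p * cLow p i j (phi u)) * (Wmat α u s l / Δ u)
          = 0 := by
  intro u h h4 hJ hG α i j l
  have hn := good_nhds u h h4
  have h1 := sub_ne_zero.2 h.1
  have h1' := sub_ne_zero.2 h.1.symm
  have h2 := sub_ne_zero.2 h.2.1
  have h3 := sub_ne_zero.2 h.2.2
  fin_cases α
  · refine reduction (G (phi u)) (Matrix.of fun s l => W1 u s l / Δ u) (Jmat u)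
      (Yc (u 0) (u 1) (u 2) (u 3) (u 4) (u 5)) (fun p => cLow p i j (phi u)) _ hG hJ
      (G_symm _) ?_ ?_ l
    · rw [Jmat_eq u h4, GY u h1 h2 h4]
      congr 1
      ext s l
      exact (wc_eq1 u h h4 s l).symm
    · have := (hasGrad_w u h1 h2 h4 i j).congr_fun
        (f' := fun x => W1 x i j / Δ x)
        (by filter_upwards [hn] with x hx using wc_eq1 x hx.1 hx.2 i j)
      exact this.2
  · have g := hasGrad_w (u ∘ sw) h1' h3 h4 i j
    rw [phi_sw] at g
    have g' := g.sw.congr_fun (f' := fun x => W2 x i j / Δ x)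
        (by filter_upwards [hn] with x hx using wc_eq2 x hx.1 hx.2 i j)
    have gy := GY (u ∘ sw) h1' h3 h4
    rw [phi_sw] at gy
    refine reduction (G (phi u)) (Matrix.of fun s l => W2 u s l / Δ u) (Jmat u)
      ((Yc (u 1) (u 0) (u 2) (u 3) (u 4) (u 5)).submatrix id sw)
      (fun p => cLow p i j (phi u)) _ hG hJ
      (G_symm _) ?_ g'.2 l
    have hw : (Matrix.of fun s l => W2 u s l / Δ u) = wc (u 1) (u 0) (u 2) (u 3) (u 4) (u 5) := by
      ext s l
      exact wc_eq2 u h h4 s l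
    have hJs : Jmat u = (Jc (u 1) (u 0) (u 2) (u 3) (u 4) (u 5)).submatrix id sw := by
      have e := Jmat_eq (u ∘ sw) h4
      change _ = Jc (u 1) (u 0) (u 2) (u 3) (u 4) (u 5) at e
      rw [← e]
      ext p k
      have hd : HasGrad (fun x => phi x p) (fun k => pd k (fun x => phi x p) (u ∘ sw)) (u ∘ sw) :=
        ⟨(hasGrad_phi (u ∘ sw) h4 p).1, fun _ => rfl⟩
      have := hd.sw.2 k
      simp only [phi_sw] at this
      exact this
    rw [hw, hJs]
    ext s k
    exact congrFun (congrFun gy s) (sw k)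
end

section
/- Let G(q) be the Monge metric of the Oriented Associativity equation, φ the coordinate change from u- to q-variables, Δ(u) = (u¹−u²)(u¹−u³)(u²−u³)u⁵, and w_{1ij}(u) = W_{1ij}(u)/Δ(u), w_{2ij}(u) = W_{2ij}(u)/Δ(u) the two explicit skew-symmetric matrices. On the open set of u ∈ ℝ⁶ where u¹, u², u³ are pairwise distinct, u⁵ ≠ 0 and G(φ(u)) is invertible, define g^{sp} := entries of G(φ(u))⁻¹, c_{pml}(q) := (1/3)(∂G_{lp}/∂q^m − ∂G_{mp}/∂q^l), and c^s_{ml} := Σ_p g^{sp} c_{pml}(φ(u)). Then for all indices n, m, l, k ∈ {1,…,6}: (∂c_{nml}/∂q^k)(φ(u)) + Σ_s c^s_{ml} c_{snk}(φ(u)) + 2·w_{1ml}(u)w_{1nk}(u) + w_{1ml}(u)w_{2nk}(u) + w_{2ml}(u)w_{1nk}(u) + 2·w_{2ml}(u)w_{2nk}(u) = 0. This is the integrability condition proving that the Oriented Associativity equation in hydrodynamic form admits the nonlocal third-order homogeneous Hamiltonian operator B = ∂_x(g^{ij}∂_x + c^{ij}_k u^k_x + 2 w^i_{1k}u^k_x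 ∂_x⁻¹ w^j_{1h}u^h_x + (w^i_{1k}u^k_x ∂_x⁻¹ w^j_{2h}u^h_x + w^i_{2k}u^k_x ∂_x⁻¹ w^j_{1h}u^h_x) + 2 w^i_{2k}u^k_x ∂_x⁻¹ w^j_{2h}u^h_x)∂_x with constants c¹ = 2, c² = 1, c³ = 2. -/
set_option linter.all false

/-- Scaled raised covector component. -/
def sR00 (q : Fin 6 → ℝ) : ℝ :=
  q 0 ^ 2 * q 2 + 3 * q 0 * q 1 * q 4 + 2 * q 0 * q 2 ^ 2 * q 5 + q 0 * q 2 * q 3 * q 4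
        - 2 * q 0 * q 2 * q 5 ^ 2 + 5 * q 0 * q 3 * q 4 * q 5 - 2 * q 1 * q 2 ^ 2 * q 4
        + 5 * q 1 * q 2 * q 4 * q 5 - 6 * q 1 * q 3 * q 4 ^ 2 + q 1 * q 4 * q 5 ^ 2
        + q 2 ^ 3 * q 5 ^ 2 - q 2 ^ 2 * q 3 * q 4 * q 5 - 2 * q 2 ^ 2 * q 5 ^ 3
        + 6 * q 2 * q 3 * q 4 * q 5 ^ 2 + q 2 * q 5 ^ 4 - 4 * q 3 ^ 2 * q 4 ^ 2 * q 5
        - q 3 * q 4 * q 5 ^ 3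

/-- Scaled raised covector component. -/
def sR01 (q : Fin 6 → ℝ) : ℝ :=
  4 * q 0 ^ 2 * q 3 - 7 * q 0 * q 1 * q 2 + 8 * q 0 * q 1 * q 5 + q 0 * q 2 ^ 2 * q 3
        - 3 * q 0 * q 2 * q 3 * q 5 + 8 * q 0 * q 3 ^ 2 * q 4 + 4 * q 0 * q 3 * q 5 ^ 2
        - 9 * q 1 ^ 2 * q 4 - 2 * q 1 * q 2 ^ 3 + 3 * q 1 * q 2 ^ 2 * q 5
        - 10 * q 1 * q 2 * q 3 * q 4 - q 1 * q 2 * q 5 ^ 2 - 4 * q 1 * q 3 * q 4 * q 5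
        - q 2 ^ 3 * q 3 * q 5 + q 2 ^ 2 * q 3 ^ 2 * q 4 + 2 * q 2 ^ 2 * q 3 * q 5 ^ 2
        - 6 * q 2 * q 3 ^ 2 * q 4 * q 5 - q 2 * q 3 * q 5 ^ 3 + 4 * q 3 ^ 3 * q 4 ^ 2
        + q 3 ^ 2 * q 4 * q 5 ^ 2

/-- Scaled raised covector component. -/
def sR02 (q : Fin 6 → ℝ) : ℝ :=
  -2 * q 0 ^ 2 - 4 * q 0 * q 2 * q 5 - 4 * q 0 * q 3 * q 4 + 4 * q 0 * q 5 ^ 2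
        + 6 * q 1 * q 2 * q 4 - 12 * q 1 * q 4 * q 5 - 2 * q 2 ^ 2 * q 5 ^ 2
        + 2 * q 2 * q 3 * q 4 * q 5 + 4 * q 2 * q 5 ^ 3 - 2 * q 3 ^ 2 * q 4 ^ 2
        - 8 * q 3 * q 4 * q 5 ^ 2 - 2 * q 5 ^ 4

/-- Scaled raised covector component. -/
def sR03 (q : Fin 6 → ℝ) : ℝ :=
  6 * q 0 * q 1 + 6 * q 0 * q 3 * q 5 + 2 * q 1 * q 2 ^ 2 - 2 * q 1 * q 2 * q 5
        + 6 * q 1 * q 3 * q 4 + 2 * q 1 * q 5 ^ 2 + 2 * q 2 ^ 2 * q 3 * q 5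
        - 2 * q 2 * q 3 * q 5 ^ 2 + 6 * q 3 ^ 2 * q 4 * q 5 + 2 * q 3 * q 5 ^ 3

/-- Scaled raised covector component. -/
def sR04 (q : Fin 6 → ℝ) : ℝ :=
  q 0 * q 2 * q 4 - 2 * q 0 * q 4 * q 5 + 9 * q 1 * q 4 ^ 2 + q 2 ^ 2 * q 4 * q 5
        + q 2 * q 3 * q 4 ^ 2 - 3 * q 2 * q 4 * q 5 ^ 2 + 7 * q 3 * q 4 ^ 2 * q 5
        + 2 * q 4 * q 5 ^ 3

/-- Scaled raised covector component. -/
def sR05 (q : Fin 6 → ℝ) : ℝ :=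
  -4 * q 0 ^ 2 - q 0 * q 2 ^ 2 - 4 * q 0 * q 2 * q 5 - 8 * q 0 * q 3 * q 4
        + 4 * q 0 * q 5 ^ 2 + 3 * q 1 * q 2 * q 4 - 6 * q 1 * q 4 * q 5 - q 2 ^ 3 * q 5
        - q 2 ^ 2 * q 3 * q 4 + q 2 ^ 2 * q 5 ^ 2 - q 2 * q 3 * q 4 * q 5
        - 4 * q 3 ^ 2 * q 4 ^ 2 - 2 * q 3 * q 4 * q 5 ^ 2

/-- Scaled raised covector component. -/
def sR10 (q : Fin 6 → ℝ) : ℝ :=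
  -2 * q 0 ^ 2 * q 4 - q 0 * q 2 ^ 2 * q 4 - q 0 * q 2 * q 4 * q 5
        + 2 * q 0 * q 3 * q 4 ^ 2 + 2 * q 0 * q 4 * q 5 ^ 2 - 3 * q 1 * q 2 * q 4 ^ 2
        - 3 * q 1 * q 4 ^ 2 * q 5 - q 2 ^ 3 * q 4 * q 5 + q 2 ^ 2 * q 3 * q 4 ^ 2
        + 2 * q 2 ^ 2 * q 4 * q 5 ^ 2 - 6 * q 2 * q 3 * q 4 ^ 2 * q 5 - q 2 * q 4 * q 5 ^ 3
        + 4 * q 3 ^ 2 * q 4 ^ 3 + q 3 * q 4 ^ 2 * q 5 ^ 2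

/-- Scaled raised covector component. -/
def sR11 (q : Fin 6 → ℝ) : ℝ :=
  4 * q 0 ^ 2 * q 2 - 4 * q 0 ^ 2 * q 5 + 6 * q 0 * q 1 * q 4 + q 0 * q 2 ^ 3
        + 3 * q 0 * q 2 ^ 2 * q 5 - 8 * q 0 * q 2 * q 5 ^ 2 + 14 * q 0 * q 3 * q 4 * q 5
        + 4 * q 0 * q 5 ^ 3 - q 1 * q 2 ^ 2 * q 4 + 7 * q 1 * q 2 * q 4 * q 5
        - 12 * q 1 * q 3 * q 4 ^ 2 - 4 * q 1 * q 4 * q 5 ^ 2 + q 2 ^ 4 * q 5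
        - q 2 ^ 3 * q 3 * q 4 - 2 * q 2 ^ 3 * q 5 ^ 2 + 6 * q 2 ^ 2 * q 3 * q 4 * q 5
        + q 2 ^ 2 * q 5 ^ 3 - 4 * q 2 * q 3 ^ 2 * q 4 ^ 2 - q 2 * q 3 * q 4 * q 5 ^ 2

/-- Scaled raised covector component. -/
def sR12 (q : Fin 6 → ℝ) : ℝ :=
  q 0 * q 2 * q 4 - 2 * q 0 * q 4 * q 5 + 9 * q 1 * q 4 ^ 2 + q 2 ^ 2 * q 4 * q 5
        + q 2 * q 3 * q 4 ^ 2 - 3 * q 2 * q 4 * q 5 ^ 2 + 7 * q 3 * q 4 ^ 2 * q 5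
        + 2 * q 4 * q 5 ^ 3

/-- Scaled raised covector component. -/
def sR13 (q : Fin 6 → ℝ) : ℝ :=
  -4 * q 0 ^ 2 - q 0 * q 2 ^ 2 - 4 * q 0 * q 2 * q 5 - 8 * q 0 * q 3 * q 4
        + 4 * q 0 * q 5 ^ 2 + 3 * q 1 * q 2 * q 4 - 6 * q 1 * q 4 * q 5 - q 2 ^ 3 * q 5
        - q 2 ^ 2 * q 3 * q 4 + q 2 ^ 2 * q 5 ^ 2 - q 2 * q 3 * q 4 * q 5
        - 4 * q 3 ^ 2 * q 4 ^ 2 - 2 * q 3 * q 4 * q 5 ^ 2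

/-- Scaled raised covector component. -/
def sR14 (q : Fin 6 → ℝ) : ℝ :=
  -6 * q 0 * q 4 ^ 2 - 2 * q 2 ^ 2 * q 4 ^ 2 + 2 * q 2 * q 4 ^ 2 * q 5
        - 6 * q 3 * q 4 ^ 3 - 2 * q 4 ^ 2 * q 5 ^ 2

/-- Scaled raised covector component. -/
def sR15 (q : Fin 6 → ℝ) : ℝ :=
  8 * q 0 * q 2 * q 4 - 16 * q 0 * q 4 * q 5 + 18 * q 1 * q 4 ^ 2 + 2 * q 2 ^ 3 * q 4
        - 4 * q 2 ^ 2 * q 4 * q 5 + 8 * q 2 * q 3 * q 4 ^ 2 + 2 * q 3 * q 4 ^ 2 * q 5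

/-- Scaled raised covector component. -/
def sR20 (q : Fin 6 → ℝ) : ℝ :=
  q 0 ^ 2 * q 2 * q 4 - 2 * q 0 ^ 2 * q 4 * q 5 + 3 * q 0 * q 1 * q 4 ^ 2
        + q 0 * q 2 ^ 2 * q 4 * q 5 + q 0 * q 2 * q 3 * q 4 ^ 2
        - 3 * q 0 * q 2 * q 4 * q 5 ^ 2 + 7 * q 0 * q 3 * q 4 ^ 2 * q 5
        + 2 * q 0 * q 4 * q 5 ^ 3 - 2 * q 1 * q 2 ^ 2 * q 4 ^ 2
        + 2 * q 1 * q 2 * q 4 ^ 2 * q 5 - 6 * q 1 * q 3 * q 4 ^ 3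
        - 2 * q 1 * q 4 ^ 2 * q 5 ^ 2

/-- Scaled raised covector component. -/
def sR21 (q : Fin 6 → ℝ) : ℝ :=
  -4 * q 0 ^ 3 - q 0 ^ 2 * q 2 ^ 2 - 4 * q 0 ^ 2 * q 2 * q 5 - 8 * q 0 ^ 2 * q 3 * q 4
        + 4 * q 0 ^ 2 * q 5 ^ 2 + 11 * q 0 * q 1 * q 2 * q 4 - 22 * q 0 * q 1 * q 4 * q 5
        - q 0 * q 2 ^ 3 * q 5 - q 0 * q 2 ^ 2 * q 3 * q 4 + q 0 * q 2 ^ 2 * q 5 ^ 2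
        - q 0 * q 2 * q 3 * q 4 * q 5 - 4 * q 0 * q 3 ^ 2 * q 4 ^ 2
        - 2 * q 0 * q 3 * q 4 * q 5 ^ 2 + 18 * q 1 ^ 2 * q 4 ^ 2 + 2 * q 1 * q 2 ^ 3 * q 4
        - 4 * q 1 * q 2 ^ 2 * q 4 * q 5 + 8 * q 1 * q 2 * q 3 * q 4 ^ 2
        + 2 * q 1 * q 3 * q 4 ^ 2 * q 5

/-- Scaled raised covector component. -/
def sR22 (q : Fin 6 → ℝ) : ℝ :=
  -2 * q 0 ^ 2 * q 4 - 3 * q 0 * q 2 * q 4 * q 5 - 4 * q 0 * q 3 * q 4 ^ 2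
        + 2 * q 0 * q 4 * q 5 ^ 2 + 6 * q 1 * q 2 * q 4 ^ 2 - 3 * q 1 * q 4 ^ 2 * q 5
        - q 2 ^ 2 * q 4 * q 5 ^ 2 + 3 * q 2 * q 3 * q 4 ^ 2 * q 5 + q 2 * q 4 * q 5 ^ 3
        - 2 * q 3 ^ 2 * q 4 ^ 3 - q 3 * q 4 ^ 2 * q 5 ^ 2

/-- Scaled raised covector component. -/
def sR23 (q : Fin 6 → ℝ) : ℝ :=
  -4 * q 0 ^ 2 * q 5 + 6 * q 0 * q 1 * q 4 - q 0 * q 2 ^ 2 * q 5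
        - 4 * q 0 * q 2 * q 5 ^ 2 - 2 * q 0 * q 3 * q 4 * q 5 + 4 * q 0 * q 5 ^ 3
        + 2 * q 1 * q 2 ^ 2 * q 4 + q 1 * q 2 * q 4 * q 5 + 6 * q 1 * q 3 * q 4 ^ 2
        - 4 * q 1 * q 4 * q 5 ^ 2 - q 2 ^ 3 * q 5 ^ 2 + q 2 ^ 2 * q 3 * q 4 * q 5
        + q 2 ^ 2 * q 5 ^ 3 - 3 * q 2 * q 3 * q 4 * q 5 ^ 2 + 2 * q 3 ^ 2 * q 4 ^ 2 * q 5

/-- Scaled raised covector component. -/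
def sR24 (q : Fin 6 → ℝ) : ℝ :=
  q 0 * q 2 * q 4 ^ 2 - 8 * q 0 * q 4 ^ 2 * q 5 + 9 * q 1 * q 4 ^ 3
        - q 2 ^ 2 * q 4 ^ 2 * q 5 + q 2 * q 3 * q 4 ^ 3 - q 2 * q 4 ^ 2 * q 5 ^ 2
        + q 3 * q 4 ^ 3 * q 5

/-- Scaled raised covector component. -/
def sR25 (q : Fin 6 → ℝ) : ℝ :=
  -4 * q 0 ^ 2 * q 4 - q 0 * q 2 ^ 2 * q 4 + 4 * q 0 * q 2 * q 4 * q 5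
        - 8 * q 0 * q 3 * q 4 ^ 2 - 12 * q 0 * q 4 * q 5 ^ 2 + 3 * q 1 * q 2 * q 4 ^ 2
        + 12 * q 1 * q 4 ^ 2 * q 5 + q 2 ^ 3 * q 4 * q 5 - q 2 ^ 2 * q 3 * q 4 ^ 2
        - 3 * q 2 ^ 2 * q 4 * q 5 ^ 2 + 7 * q 2 * q 3 * q 4 ^ 2 * q 5
        - 4 * q 3 ^ 2 * q 4 ^ 3

/-- Scaled raised covector component. -/
def sR30 (q : Fin 6 → ℝ) : ℝ :=
  2 * q 0 ^ 2 * q 1 * q 4 - q 0 ^ 2 * q 2 * q 3 * q 4 + 2 * q 0 ^ 2 * q 3 * q 4 * q 5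
        + q 0 * q 1 * q 2 ^ 2 * q 4 + q 0 * q 1 * q 2 * q 4 * q 5
        - 5 * q 0 * q 1 * q 3 * q 4 ^ 2 - 2 * q 0 * q 1 * q 4 * q 5 ^ 2
        - q 0 * q 2 ^ 2 * q 3 * q 4 * q 5 - q 0 * q 2 * q 3 ^ 2 * q 4 ^ 2
        + 3 * q 0 * q 2 * q 3 * q 4 * q 5 ^ 2 - 7 * q 0 * q 3 ^ 2 * q 4 ^ 2 * q 5
        - 2 * q 0 * q 3 * q 4 * q 5 ^ 3 + 3 * q 1 ^ 2 * q 2 * q 4 ^ 2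
        + 3 * q 1 ^ 2 * q 4 ^ 2 * q 5 + q 1 * q 2 ^ 3 * q 4 * q 5
        + q 1 * q 2 ^ 2 * q 3 * q 4 ^ 2 - 2 * q 1 * q 2 ^ 2 * q 4 * q 5 ^ 2
        + 4 * q 1 * q 2 * q 3 * q 4 ^ 2 * q 5 + q 1 * q 2 * q 4 * q 5 ^ 3
        + 2 * q 1 * q 3 ^ 2 * q 4 ^ 3 + q 1 * q 3 * q 4 ^ 2 * q 5 ^ 2

/-- Scaled raised covector component. -/
def sR31 (q : Fin 6 → ℝ) : ℝ :=
  4 * q 0 ^ 3 * q 3 - 4 * q 0 ^ 2 * q 1 * q 2 + 4 * q 0 ^ 2 * q 1 * q 5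
        + q 0 ^ 2 * q 2 ^ 2 * q 3 + 4 * q 0 ^ 2 * q 2 * q 3 * q 5
        + 8 * q 0 ^ 2 * q 3 ^ 2 * q 4 - 4 * q 0 ^ 2 * q 3 * q 5 ^ 2
        - 6 * q 0 * q 1 ^ 2 * q 4 - q 0 * q 1 * q 2 ^ 3 - 3 * q 0 * q 1 * q 2 ^ 2 * q 5
        - 11 * q 0 * q 1 * q 2 * q 3 * q 4 + 8 * q 0 * q 1 * q 2 * q 5 ^ 2
        + 8 * q 0 * q 1 * q 3 * q 4 * q 5 - 4 * q 0 * q 1 * q 5 ^ 3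
        + q 0 * q 2 ^ 3 * q 3 * q 5 + q 0 * q 2 ^ 2 * q 3 ^ 2 * q 4
        - q 0 * q 2 ^ 2 * q 3 * q 5 ^ 2 + q 0 * q 2 * q 3 ^ 2 * q 4 * q 5
        + 4 * q 0 * q 3 ^ 3 * q 4 ^ 2 + 2 * q 0 * q 3 ^ 2 * q 4 * q 5 ^ 2
        + q 1 ^ 2 * q 2 ^ 2 * q 4 - 7 * q 1 ^ 2 * q 2 * q 4 * q 5
        - 6 * q 1 ^ 2 * q 3 * q 4 ^ 2 + 4 * q 1 ^ 2 * q 4 * q 5 ^ 2 - q 1 * q 2 ^ 4 * q 5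
        - q 1 * q 2 ^ 3 * q 3 * q 4 + 2 * q 1 * q 2 ^ 3 * q 5 ^ 2
        - 2 * q 1 * q 2 ^ 2 * q 3 * q 4 * q 5 - q 1 * q 2 ^ 2 * q 5 ^ 3
        - 4 * q 1 * q 2 * q 3 ^ 2 * q 4 ^ 2 + q 1 * q 2 * q 3 * q 4 * q 5 ^ 2
        - 2 * q 1 * q 3 ^ 2 * q 4 ^ 2 * q 5

/-- Scaled raised covector component. -/
def sR32 (q : Fin 6 → ℝ) : ℝ :=
  2 * q 0 ^ 2 * q 3 * q 4 - q 0 * q 1 * q 2 * q 4 + 2 * q 0 * q 1 * q 4 * q 5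
        + 3 * q 0 * q 2 * q 3 * q 4 * q 5 + 4 * q 0 * q 3 ^ 2 * q 4 ^ 2
        - 2 * q 0 * q 3 * q 4 * q 5 ^ 2 - 9 * q 1 ^ 2 * q 4 ^ 2 - q 1 * q 2 ^ 2 * q 4 * q 5
        - 7 * q 1 * q 2 * q 3 * q 4 ^ 2 + 3 * q 1 * q 2 * q 4 * q 5 ^ 2
        - 4 * q 1 * q 3 * q 4 ^ 2 * q 5 - 2 * q 1 * q 4 * q 5 ^ 3
        + q 2 ^ 2 * q 3 * q 4 * q 5 ^ 2 - 3 * q 2 * q 3 ^ 2 * q 4 ^ 2 * q 5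
        - q 2 * q 3 * q 4 * q 5 ^ 3 + 2 * q 3 ^ 3 * q 4 ^ 3 + q 3 ^ 2 * q 4 ^ 2 * q 5 ^ 2

/-- Scaled raised covector component. -/
def sR33 (q : Fin 6 → ℝ) : ℝ :=
  4 * q 0 ^ 2 * q 1 + 4 * q 0 ^ 2 * q 3 * q 5 + q 0 * q 1 * q 2 ^ 2
        + 4 * q 0 * q 1 * q 2 * q 5 + 2 * q 0 * q 1 * q 3 * q 4 - 4 * q 0 * q 1 * q 5 ^ 2
        + q 0 * q 2 ^ 2 * q 3 * q 5 + 4 * q 0 * q 2 * q 3 * q 5 ^ 2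
        + 2 * q 0 * q 3 ^ 2 * q 4 * q 5 - 4 * q 0 * q 3 * q 5 ^ 3 - 3 * q 1 ^ 2 * q 2 * q 4
        + 6 * q 1 ^ 2 * q 4 * q 5 + q 1 * q 2 ^ 3 * q 5 - q 1 * q 2 ^ 2 * q 3 * q 4
        - q 1 * q 2 ^ 2 * q 5 ^ 2 - 2 * q 1 * q 3 ^ 2 * q 4 ^ 2
        + 6 * q 1 * q 3 * q 4 * q 5 ^ 2 + q 2 ^ 3 * q 3 * q 5 ^ 2
        - q 2 ^ 2 * q 3 ^ 2 * q 4 * q 5 - q 2 ^ 2 * q 3 * q 5 ^ 3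
        + 3 * q 2 * q 3 ^ 2 * q 4 * q 5 ^ 2 - 2 * q 3 ^ 3 * q 4 ^ 2 * q 5

/-- Scaled raised covector component. -/
def sR34 (q : Fin 6 → ℝ) : ℝ :=
  6 * q 0 * q 1 * q 4 ^ 2 - q 0 * q 2 * q 3 * q 4 ^ 2 + 8 * q 0 * q 3 * q 4 ^ 2 * q 5
        + 2 * q 1 * q 2 ^ 2 * q 4 ^ 2 - 2 * q 1 * q 2 * q 4 ^ 2 * q 5
        - 3 * q 1 * q 3 * q 4 ^ 3 + 2 * q 1 * q 4 ^ 2 * q 5 ^ 2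
        + q 2 ^ 2 * q 3 * q 4 ^ 2 * q 5 - q 2 * q 3 ^ 2 * q 4 ^ 3
        + q 2 * q 3 * q 4 ^ 2 * q 5 ^ 2 - q 3 ^ 2 * q 4 ^ 3 * q 5

/-- Scaled raised covector component. -/
def sR35 (q : Fin 6 → ℝ) : ℝ :=
  -4 * q 0 ^ 3 - q 0 ^ 2 * q 2 ^ 2 - 8 * q 0 ^ 2 * q 2 * q 5 - 8 * q 0 ^ 2 * q 3 * q 4
        + 8 * q 0 ^ 2 * q 5 ^ 2 + 10 * q 0 * q 1 * q 2 * q 4 - 20 * q 0 * q 1 * q 4 * q 5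
        - 2 * q 0 * q 2 ^ 3 * q 5 - q 0 * q 2 ^ 2 * q 3 * q 4 - 2 * q 0 * q 2 ^ 2 * q 5 ^ 2
        - 2 * q 0 * q 2 * q 3 * q 4 * q 5 + 8 * q 0 * q 2 * q 5 ^ 3
        - 4 * q 0 * q 3 ^ 2 * q 4 ^ 2 - 8 * q 0 * q 3 * q 4 * q 5 ^ 2 - 4 * q 0 * q 5 ^ 4
        + 9 * q 1 ^ 2 * q 4 ^ 2 + 2 * q 1 * q 2 ^ 3 * q 4 - 2 * q 1 * q 2 ^ 2 * q 4 * q 5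
        + 7 * q 1 * q 2 * q 3 * q 4 ^ 2 - 6 * q 1 * q 2 * q 4 * q 5 ^ 2
        + 4 * q 1 * q 3 * q 4 ^ 2 * q 5 + 4 * q 1 * q 4 * q 5 ^ 3 - q 2 ^ 4 * q 5 ^ 2
        + q 2 ^ 3 * q 3 * q 4 * q 5 + 2 * q 2 ^ 3 * q 5 ^ 3
        - 5 * q 2 ^ 2 * q 3 * q 4 * q 5 ^ 2 - q 2 ^ 2 * q 5 ^ 4
        + 3 * q 2 * q 3 ^ 2 * q 4 ^ 2 * q 5 + 2 * q 2 * q 3 * q 4 * q 5 ^ 3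
        - q 3 ^ 2 * q 4 ^ 2 * q 5 ^ 2

/-- Scaled raised covector component. -/
def sR40 (q : Fin 6 → ℝ) : ℝ :=
  -2 * q 0 ^ 3 - 4 * q 0 ^ 2 * q 2 * q 5 + 2 * q 0 ^ 2 * q 3 * q 4
        + 4 * q 0 ^ 2 * q 5 ^ 2 - 6 * q 0 * q 1 * q 4 * q 5 + 2 * q 0 * q 2 ^ 2 * q 3 * q 4
        - 2 * q 0 * q 2 ^ 2 * q 5 ^ 2 + 4 * q 0 * q 2 * q 5 ^ 3
        + 4 * q 0 * q 3 ^ 2 * q 4 ^ 2 - 6 * q 0 * q 3 * q 4 * q 5 ^ 2 - 2 * q 0 * q 5 ^ 4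
        - 2 * q 1 * q 2 ^ 3 * q 4 + 4 * q 1 * q 2 ^ 2 * q 4 * q 5
        - 6 * q 1 * q 2 * q 3 * q 4 ^ 2 - 4 * q 1 * q 2 * q 4 * q 5 ^ 2
        + 6 * q 1 * q 3 * q 4 ^ 2 * q 5 + 2 * q 1 * q 4 * q 5 ^ 3

/-- Scaled raised covector component. -/
def sR41 (q : Fin 6 → ℝ) : ℝ :=
  6 * q 0 ^ 2 * q 1 - 8 * q 0 ^ 2 * q 2 * q 3 + 22 * q 0 ^ 2 * q 3 * q 5
        + 10 * q 0 * q 1 * q 2 ^ 2 - 26 * q 0 * q 1 * q 2 * q 5 - 12 * q 0 * q 1 * q 3 * q 4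
        + 18 * q 0 * q 1 * q 5 ^ 2 - 2 * q 0 * q 2 ^ 3 * q 3 + 6 * q 0 * q 2 ^ 2 * q 3 * q 5
        - 8 * q 0 * q 2 * q 3 ^ 2 * q 4 - 2 * q 0 * q 2 * q 3 * q 5 ^ 2
        + 4 * q 0 * q 3 ^ 2 * q 4 * q 5 + 2 * q 0 * q 3 * q 5 ^ 3 + 18 * q 1 ^ 2 * q 2 * q 4
        - 18 * q 1 ^ 2 * q 4 * q 5 + 2 * q 1 * q 2 ^ 4 - 6 * q 1 * q 2 ^ 3 * q 5
        + 8 * q 1 * q 2 ^ 2 * q 3 * q 4 + 4 * q 1 * q 2 ^ 2 * q 5 ^ 2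
        - 6 * q 1 * q 2 * q 3 * q 4 * q 5 - 2 * q 1 * q 3 * q 4 * q 5 ^ 2

/-- Scaled raised covector component. -/
def sR42 (q : Fin 6 → ℝ) : ℝ :=
  -q 0 ^ 2 * q 2 + 9 * q 0 * q 1 * q 4 - 2 * q 0 * q 2 ^ 2 * q 5
        - 3 * q 0 * q 2 * q 3 * q 4 + 2 * q 0 * q 2 * q 5 ^ 2 + 11 * q 0 * q 3 * q 4 * q 5
        + 6 * q 1 * q 2 ^ 2 * q 4 - 9 * q 1 * q 2 * q 4 * q 5 + 3 * q 1 * q 4 * q 5 ^ 2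
        - q 2 ^ 3 * q 5 ^ 2 + 3 * q 2 ^ 2 * q 3 * q 4 * q 5 + 2 * q 2 ^ 2 * q 5 ^ 3
        - 2 * q 2 * q 3 ^ 2 * q 4 ^ 2 - 4 * q 2 * q 3 * q 4 * q 5 ^ 2 - q 2 * q 5 ^ 4
        + 2 * q 3 ^ 2 * q 4 ^ 2 * q 5 + q 3 * q 4 * q 5 ^ 3

/-- Scaled raised covector component. -/
def sR43 (q : Fin 6 → ℝ) : ℝ :=
  4 * q 0 ^ 2 * q 3 - 9 * q 0 * q 1 * q 2 + 24 * q 0 * q 1 * q 5 + q 0 * q 2 ^ 2 * q 3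
        - 5 * q 0 * q 2 * q 3 * q 5 + 8 * q 0 * q 3 ^ 2 * q 4 + 20 * q 0 * q 3 * q 5 ^ 2
        - 27 * q 1 ^ 2 * q 4 - 2 * q 1 * q 2 ^ 3 + 5 * q 1 * q 2 ^ 2 * q 5
        - 12 * q 1 * q 2 * q 3 * q 4 + q 1 * q 2 * q 5 ^ 2 - 24 * q 1 * q 3 * q 4 * q 5
        - q 2 ^ 3 * q 3 * q 5 + q 2 ^ 2 * q 3 ^ 2 * q 4 + 4 * q 2 ^ 2 * q 3 * q 5 ^ 2
        - 8 * q 2 * q 3 ^ 2 * q 4 * q 5 + q 2 * q 3 * q 5 ^ 3 + 4 * q 3 ^ 3 * q 4 ^ 2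
        - q 3 ^ 2 * q 4 * q 5 ^ 2

/-- Scaled raised covector component. -/
def sR44 (q : Fin 6 → ℝ) : ℝ :=
  -6 * q 0 ^ 2 * q 4 - q 0 * q 2 ^ 2 * q 4 - 7 * q 0 * q 2 * q 4 * q 5
        - 6 * q 0 * q 3 * q 4 ^ 2 + 6 * q 0 * q 4 * q 5 ^ 2 + 9 * q 1 * q 2 * q 4 ^ 2
        - 9 * q 1 * q 4 ^ 2 * q 5 - q 2 ^ 3 * q 4 * q 5 + q 2 ^ 2 * q 3 * q 4 ^ 2
        + q 2 * q 4 * q 5 ^ 3 - q 3 * q 4 ^ 2 * q 5 ^ 2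

/-- Scaled raised covector component. -/
def sR45 (q : Fin 6 → ℝ) : ℝ :=
  4 * q 0 ^ 2 * q 2 - 12 * q 0 ^ 2 * q 5 + 18 * q 0 * q 1 * q 4 + q 0 * q 2 ^ 3
        + q 0 * q 2 ^ 2 * q 5 - 16 * q 0 * q 2 * q 5 ^ 2 + 10 * q 0 * q 3 * q 4 * q 5
        + 12 * q 0 * q 5 ^ 3 + 3 * q 1 * q 2 ^ 2 * q 4 + 9 * q 1 * q 2 * q 4 * q 5
        - 12 * q 1 * q 4 * q 5 ^ 2 + q 2 ^ 4 * q 5 - q 2 ^ 3 * q 3 * q 4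
        - 4 * q 2 ^ 3 * q 5 ^ 2 + 8 * q 2 ^ 2 * q 3 * q 4 * q 5 + 3 * q 2 ^ 2 * q 5 ^ 3
        - 4 * q 2 * q 3 ^ 2 * q 4 ^ 2 - 7 * q 2 * q 3 * q 4 * q 5 ^ 2
        + 4 * q 3 ^ 2 * q 4 ^ 2 * q 5

/-- Scaled raised covectors. -/
def sR (q : Fin 6 → ℝ) : Fin 5 → Fin 6 → ℝ :=
  ![![sR00 q, sR01 q, sR02 q, sR03 q, sR04 q, sR05 q],
    ![sR10 q, sR11 q, sR12 q, sR13 q, sR14 q, sR15 q],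
    ![sR20 q, sR21 q, sR22 q, sR23 q, sR24 q, sR25 q],
    ![sR30 q, sR31 q, sR32 q, sR33 q, sR34 q, sR35 q],
    ![sR40 q, sR41 q, sR42 q, sR43 q, sR44 q, sR45 q]]

/-- `det G / (q⁵)²`. -/
def sdisc (q : Fin 6 → ℝ) : ℝ :=
  -4 * q 0 ^ 3 - q 0 ^ 2 * q 2 ^ 2 - 8 * q 0 ^ 2 * q 2 * q 5 - 12 * q 0 ^ 2 * q 3 * q 4
        + 8 * q 0 ^ 2 * q 5 ^ 2 + 18 * q 0 * q 1 * q 2 * q 4 - 36 * q 0 * q 1 * q 4 * q 5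
        - 2 * q 0 * q 2 ^ 3 * q 5 - 2 * q 0 * q 2 ^ 2 * q 3 * q 4
        - 2 * q 0 * q 2 ^ 2 * q 5 ^ 2 + 2 * q 0 * q 2 * q 3 * q 4 * q 5
        + 8 * q 0 * q 2 * q 5 ^ 3 - 12 * q 0 * q 3 ^ 2 * q 4 ^ 2
        - 20 * q 0 * q 3 * q 4 * q 5 ^ 2 - 4 * q 0 * q 5 ^ 4 + 27 * q 1 ^ 2 * q 4 ^ 2
        + 4 * q 1 * q 2 ^ 3 * q 4 - 6 * q 1 * q 2 ^ 2 * q 4 * q 5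
        + 18 * q 1 * q 2 * q 3 * q 4 ^ 2 - 6 * q 1 * q 2 * q 4 * q 5 ^ 2
        + 18 * q 1 * q 3 * q 4 ^ 2 * q 5 + 4 * q 1 * q 4 * q 5 ^ 3 - q 2 ^ 4 * q 5 ^ 2
        + 2 * q 2 ^ 3 * q 3 * q 4 * q 5 + 2 * q 2 ^ 3 * q 5 ^ 3
        - q 2 ^ 2 * q 3 ^ 2 * q 4 ^ 2 - 8 * q 2 ^ 2 * q 3 * q 4 * q 5 ^ 2
        - q 2 ^ 2 * q 5 ^ 4 + 10 * q 2 * q 3 ^ 2 * q 4 ^ 2 * q 5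
        + 2 * q 2 * q 3 * q 4 * q 5 ^ 3 - 4 * q 3 ^ 3 * q 4 ^ 3
        - q 3 ^ 2 * q 4 ^ 2 * q 5 ^ 2


/-- Multiples of the discriminant by which `sR` is scaled. -/
def sD (q : Fin 6 → ℝ) : Fin 5 → ℝ := ![1, 1, 1, q 4, 1]

/-- The five covectors spanning the lowered symbols. -/
def sv (q : Fin 6 → ℝ) : Fin 5 → Fin 6 → ℝ :=
  ![![0, 0, -1, 0, 0, 0],
    ![0, 0, 0, 0, -1, 0],
    ![0, 0, q 4, 0, q 5 - q 2, -q 4],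
    ![0, -1, q 3, q 5 - q 2, 0, -q 3],
    ![1, 0, 0, -2 * q 4, 2 * q 3, 0]]

/-- The skew matrix with five given components. -/
def sS (x : Fin 5 → ℝ) : Fin 6 → Fin 6 → ℝ :=
  ![![0, 0, x 0, x 1, 0, 0], ![0, 0, 0, 0, x 0, x 1], ![-x 0, 0, 0, x 2, x 3, 0],
    ![-x 1, 0, -x 2, 0, x 4, x 2], ![0, -x 0, -x 3, -x 4, 0, x 3], ![0, -x 1, 0, -x 2, -x 3, 0]]

/-- The five constant skew matrices. -/
def sN (a : Fin 5) (m l : Fin 6) : ℝ := sS (Pi.single a 1) m l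

lemma sS_eq (x : Fin 5 → ℝ) (m l : Fin 6) : sS x m l = ∑ a, sN a m l * x a := by
  rw [Fin.sum_univ_five]
  unfold sN
  fin_cases m <;> fin_cases l <;> simp [sS]

/-- Constant coefficients of the derivatives of the covectors. -/
def sM : Fin 5 → Fin 5 → ℝ :=
  ![![0, 0, 0, 0, 0], ![0, 0, 0, 0, 0], ![0, 0, 0, 1, 0], ![0, 0, 1, 0, 0], ![0, 0, 0, 0, -2]]

/-- Components of the first tail. -/
noncomputable def sw1 (u : Fin 6 → ℝ) : Fin 5 → ℝ :=
  ![-(u 1 + u 2 - u 0 - u 5) * (u 1 - u 2) * u 4 / 2,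
    (u 1 - u 2) * (u 4) ^ 2,
    (u 1 - u 2) * (u 4) ^ 2 * u 0,
    -(4 * u 3 * u 4 + (u 5) ^ 2 - 2 * u 5 * u 0 + (u 0) ^ 2 - (u 1) ^ 2
      + 2 * u 1 * u 2 - (u 2) ^ 2) * (u 5 + u 0 - u 1 - u 2) * (u 1 - u 2) / 8,
    -(4 * u 3 * u 4 + (u 5) ^ 2 - 4 * u 5 * u 0 - (u 0) ^ 2 + 2 * u 0 * u 1
      + 2 * u 0 * u 2 - (u 1) ^ 2 + 2 * u 1 * u 2 - (u 2) ^ 2) * (u 1 - u 2) * u 4 / 4]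

/-- Components of the second tail. -/
noncomputable def sw2 (u : Fin 6 → ℝ) : Fin 5 → ℝ :=
  ![-(u 5 - u 0 + u 1 - u 2) * (u 0 - u 2) * u 4 / 2,
    -(u 0 - u 2) * (u 4) ^ 2,
    -(u 0 - u 2) * (u 4) ^ 2 * u 1,
    (4 * u 3 * u 4 + (u 5) ^ 2 - 2 * u 5 * u 1 - (u 0) ^ 2 + 2 * u 0 * u 2
      + (u 1) ^ 2 - (u 2) ^ 2) * (u 5 - u 0 + u 1 - u 2) * (u 0 - u 2) / 8,
    -((u 1 - u 2) ^ 2 + (u 0) ^ 2 - 2 * (u 1 + u 2) * u 0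
      - (u 5 - 4 * u 1) * u 5 - 4 * u 3 * u 4) * (u 0 - u 2) * u 4 / 4]

lemma sW1 (u : Fin 6 → ℝ) (m l : Fin 6) : W1 u m l = ∑ a, sN a m l * sw1 u a := by
  rw [← sS_eq]
  fin_cases m <;> fin_cases l <;> rfl

lemma sW2 (u : Fin 6 → ℝ) (m l : Fin 6) : W2 u m l = ∑ a, sN a m l * sw2 u a := by
  rw [← sS_eq]
  fin_cases m <;> fin_cases l <;> rfl

/-- A polarised form of the derivative of `G`. -/
def sDG (q e : Fin 6 → ℝ) : Fin 6 → Fin 6 → ℝ :=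
  ![![0, 0, e 2, -e 4, 2 * e 3, 0],
    ![0, 0, 2 * e 4, 0, -e 2 + 2 * e 5, -e 4],
    ![e 2, 2 * e 4, -2 * (e 0 + (e 3 * q 4 + q 3 * e 4)), e 4 * (q 2 - q 5) + q 4 * (e 2 - e 5),
       -e 1 + (e 3 * (q 2 - q 5) + q 3 * (e 2 - e 5)), 2 * e 3 * q 4 + 2 * q 3 * e 4],
    ![-e 4, 0, e 4 * (q 2 - q 5) + q 4 * (e 2 - e 5), 4 * q 4 * e 4,
       -e 0 + e 2 * (-q 2 + 2 * q 5) + q 2 * (-e 2 + 2 * e 5) - 2 * e 3 * q 4 - 2 * q 3 * e 4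
         - 2 * q 5 * e 5, e 4 * (-q 2 + q 5) + q 4 * (-e 2 + e 5)],
    ![2 * e 3, -e 2 + 2 * e 5, -e 1 + (e 3 * (q 2 - q 5) + q 3 * (e 2 - e 5)),
       -e 0 + e 2 * (-q 2 + 2 * q 5) + q 2 * (-e 2 + 2 * e 5) - 2 * e 3 * q 4 - 2 * q 3 * e 4
         - 2 * q 5 * e 5, 4 * q 3 * e 3,
       -e 1 + e 3 * (-q 2 + q 5) + q 3 * (-e 2 + e 5)],
    ![0, -e 4, 2 * e 3 * q 4 + 2 * q 3 * e 4, e 4 * (-q 2 + q 5) + q 4 * (-e 2 + e 5),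
       -e 1 + e 3 * (-q 2 + q 5) + q 3 * (-e 2 + e 5),
       -2 * e 3 * q 4 - 2 * q 3 * e 4]]

/-- A quadratic function has the expected derivative. -/
lemma s_pd_of_line (k : Fin 6) (f : (Fin 6 → ℝ) → ℝ) (q : Fin 6 → ℝ) (a b : ℝ)
    (hf : Differentiable ℝ f)
    (h : ∀ t : ℝ, f (q + t • Pi.single k 1) = f q + t * a + t ^ 2 * b) : pd k f q = a := by
  unfold pd
  rw [← (hf q).lineDeriv_eq_fderiv]
  unfold lineDeriv
  rw [show (fun t : ℝ => f (q + t • Pi.single k 1)) = fun t => f q + t * a + t ^ 2 * b from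
    funext h]
  have h1 : HasDerivAt (fun t : ℝ => f q + t * a + t ^ 2 * b)
      (1 * a + (2 * (0:ℝ) ^ (2 - 1) * 1) * b) 0 := by
    have h2 := (((hasDerivAt_id' (0:ℝ)).mul_const a).const_add (f q)).add
      (((hasDerivAt_id' (0:ℝ)).pow 2).mul_const b)
    exact h2
  rw [h1.deriv]; simp

lemma sG_diff (i j : Fin 6) : Differentiable ℝ (fun x => G x i j) := by
  fin_cases i <;> fin_cases j <;> simp [G] <;> fun_prop

lemma sG_pd (k i j : Fin 6) (q : Fin 6 → ℝ) :
    pd k (fun x => G x i j) q = sDG q (Pi.single k 1) i j := by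
  apply s_pd_of_line k _ q _ (G (Pi.single k 1) i j - G 0 i j - sDG 0 (Pi.single k 1) i j)
    (sG_diff i j)
  intro t
  generalize (Pi.single k 1 : Fin 6 → ℝ) = e
  fin_cases i <;> fin_cases j <;> simp [G, sDG] <;> ring


set_option maxHeartbeats 4000000 in
lemma s_cLow_aux (p m l : Fin 6) (q : Fin 6 → ℝ) (hml : m < l) :
    (1 / 3) * (sDG q (Pi.single m 1) l p - sDG q (Pi.single l 1) m p)
      = sS (fun a => sv q a p) m l := by
  fin_cases m <;> fin_cases l <;> first
    | exact absurd hml (by decide)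
    | (clear hml; fin_cases p <;> simp [sS, sv, sDG] <;> ring)

lemma sS_skew (x : Fin 5 → ℝ) (m l : Fin 6) : sS x l m = - sS x m l := by
  fin_cases m <;> fin_cases l <;> simp [sS]

lemma s_cLow (p m l : Fin 6) (q : Fin 6 → ℝ) : cLow p m l q = ∑ a, sN a m l * sv q a p := by
  unfold cLow
  rw [sG_pd, sG_pd, ← sS_eq (fun a => sv q a p)]
  rcases lt_trichotomy m l with h | h | h
  · exact s_cLow_aux p m l q h
  · subst h
    have := sS_skew (fun a => sv q a p) m m
    linarith
  · rw [sS_skew, ← s_cLow_aux p l m q h]; ring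

lemma sv_diff (a : Fin 5) (p : Fin 6) : Differentiable ℝ (fun x => sv x a p) := by
  fin_cases a <;> fin_cases p <;> simp [sv] <;> fun_prop

lemma sv_pd (a : Fin 5) (n k : Fin 6) (q : Fin 6 → ℝ) :
    pd k (fun x => sv x a n) q = ∑ b, sN b n k * sM a b := by
  rw [← sS_eq]
  apply s_pd_of_line k _ q _ 0 (sv_diff a n)
  intro t
  fin_cases a <;> fin_cases n <;> simp [sv, sM, sS] <;>
    fin_cases k <;> simp <;> ring

lemma s_cLow_pd (k n m l : Fin 6) (q : Fin 6 → ℝ) :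
    pd k (fun x => cLow n m l x) q = ∑ a, ∑ b, sN a m l * sN b n k * sM a b := by
  have h : (fun x => cLow n m l x) = fun x => ∑ a, sN a m l * sv x a n :=
    funext fun x => s_cLow n m l x
  rw [h]
  unfold pd
  rw [fderiv_fun_sum (fun a _ => ((sv_diff a n) q).const_mul _)]
  rw [sum_apply]
  refine Finset.sum_congr rfl fun a _ => ?_
  rw [fderiv_const_mul ((sv_diff a n) q)]
  have := sv_pd a n k q
  unfold pd at this
  rw [smul_apply, this, smul_eq_mul, Finset.mul_sum]
  exact Finset.sum_congr rfl fun b _ => by ring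


/-- A contraction. -/
def sT00 (q : Fin 6 → ℝ) : ℝ :=
  2 * q 0 ^ 2 * q 4 ^ 2 + 4 * q 0 * q 2 * q 4 ^ 2 * q 5 + 4 * q 0 * q 3 * q 4 ^ 3
        - 4 * q 0 * q 4 ^ 2 * q 5 ^ 2 - 6 * q 1 * q 2 * q 4 ^ 2 + 12 * q 1 * q 4 ^ 2 * q 5
        + 2 * q 2 ^ 2 * q 4 ^ 2 * q 5 ^ 2 - 2 * q 2 * q 3 * q 4 ^ 3 * q 5
        - 4 * q 2 * q 4 ^ 2 * q 5 ^ 3 + 2 * q 3 ^ 2 * q 4 ^ 4 + 8 * q 3 * q 4 ^ 3 * q 5 ^ 2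
        + 2 * q 4 ^ 2 * q 5 ^ 4

/-- A contraction. -/
def sT01 (q : Fin 6 → ℝ) : ℝ :=
  -q 0 * q 2 * q 4 ^ 3 + 2 * q 0 * q 4 ^ 3 * q 5 - 9 * q 1 * q 4 ^ 3
        - q 2 ^ 2 * q 4 ^ 3 * q 5 - q 2 * q 3 * q 4 ^ 4 + 3 * q 2 * q 4 ^ 3 * q 5 ^ 2
        - 7 * q 3 * q 4 ^ 4 * q 5 - 2 * q 4 ^ 3 * q 5 ^ 3

/-- A contraction. -/
def sT02 (q : Fin 6 → ℝ) : ℝ :=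
  2 * q 0 ^ 2 * q 4 ^ 3 + 3 * q 0 * q 2 * q 4 ^ 3 * q 5 + 4 * q 0 * q 3 * q 4 ^ 4
        - 2 * q 0 * q 4 ^ 3 * q 5 ^ 2 - 6 * q 1 * q 2 * q 4 ^ 3 + 3 * q 1 * q 4 ^ 3 * q 5
        + q 2 ^ 2 * q 4 ^ 3 * q 5 ^ 2 - 3 * q 2 * q 3 * q 4 ^ 4 * q 5
        - q 2 * q 4 ^ 3 * q 5 ^ 3 + 2 * q 3 ^ 2 * q 4 ^ 5 + q 3 * q 4 ^ 4 * q 5 ^ 2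

/-- A contraction. -/
def sT03 (q : Fin 6 → ℝ) : ℝ :=
  -2 * q 0 ^ 2 * q 3 * q 4 ^ 2 + q 0 * q 1 * q 2 * q 4 - 2 * q 0 * q 1 * q 4 * q 5
        - 3 * q 0 * q 2 * q 3 * q 4 ^ 2 * q 5 - 4 * q 0 * q 3 ^ 2 * q 4 ^ 3
        + 2 * q 0 * q 3 * q 4 ^ 2 * q 5 ^ 2 + 9 * q 1 ^ 2 * q 4 + q 1 * q 2 ^ 2 * q 4 * q 5
        + 7 * q 1 * q 2 * q 3 * q 4 ^ 2 - 3 * q 1 * q 2 * q 4 * q 5 ^ 2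
        + 4 * q 1 * q 3 * q 4 ^ 2 * q 5 + 2 * q 1 * q 4 * q 5 ^ 3
        - q 2 ^ 2 * q 3 * q 4 ^ 2 * q 5 ^ 2 + 3 * q 2 * q 3 ^ 2 * q 4 ^ 3 * q 5
        + q 2 * q 3 * q 4 ^ 2 * q 5 ^ 3 - 2 * q 3 ^ 3 * q 4 ^ 4
        - q 3 ^ 2 * q 4 ^ 3 * q 5 ^ 2

/-- A contraction. -/
def sT04 (q : Fin 6 → ℝ) : ℝ :=
  q 0 ^ 2 * q 2 * q 4 ^ 2 - 9 * q 0 * q 1 * q 4 ^ 2 + 2 * q 0 * q 2 ^ 2 * q 4 ^ 2 * q 5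
        + 3 * q 0 * q 2 * q 3 * q 4 ^ 3 - 2 * q 0 * q 2 * q 4 ^ 2 * q 5 ^ 2
        - 11 * q 0 * q 3 * q 4 ^ 3 * q 5 - 6 * q 1 * q 2 ^ 2 * q 4 ^ 2
        + 9 * q 1 * q 2 * q 4 ^ 2 * q 5 - 3 * q 1 * q 4 ^ 2 * q 5 ^ 2
        + q 2 ^ 3 * q 4 ^ 2 * q 5 ^ 2 - 3 * q 2 ^ 2 * q 3 * q 4 ^ 3 * q 5
        - 2 * q 2 ^ 2 * q 4 ^ 2 * q 5 ^ 3 + 2 * q 2 * q 3 ^ 2 * q 4 ^ 4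
        + 4 * q 2 * q 3 * q 4 ^ 3 * q 5 ^ 2 + q 2 * q 4 ^ 2 * q 5 ^ 4
        - 2 * q 3 ^ 2 * q 4 ^ 4 * q 5 - q 3 * q 4 ^ 3 * q 5 ^ 3

/-- A contraction. -/
def sT11 (q : Fin 6 → ℝ) : ℝ :=
  6 * q 0 * q 4 ^ 4 + 2 * q 2 ^ 2 * q 4 ^ 4 - 2 * q 2 * q 4 ^ 4 * q 5
        + 6 * q 3 * q 4 ^ 5 + 2 * q 4 ^ 4 * q 5 ^ 2

/-- A contraction. -/
def sT12 (q : Fin 6 → ℝ) : ℝ :=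
  -q 0 * q 2 * q 4 ^ 4 + 8 * q 0 * q 4 ^ 4 * q 5 - 9 * q 1 * q 4 ^ 4
        + q 2 ^ 2 * q 4 ^ 4 * q 5 - q 2 * q 3 * q 4 ^ 5 + q 2 * q 4 ^ 4 * q 5 ^ 2
        - q 3 * q 4 ^ 5 * q 5

/-- A contraction. -/
def sT13 (q : Fin 6 → ℝ) : ℝ :=
  -6 * q 0 * q 1 * q 4 ^ 2 + q 0 * q 2 * q 3 * q 4 ^ 3 - 8 * q 0 * q 3 * q 4 ^ 3 * q 5
        - 2 * q 1 * q 2 ^ 2 * q 4 ^ 2 + 2 * q 1 * q 2 * q 4 ^ 2 * q 5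
        + 3 * q 1 * q 3 * q 4 ^ 3 - 2 * q 1 * q 4 ^ 2 * q 5 ^ 2
        - q 2 ^ 2 * q 3 * q 4 ^ 3 * q 5 + q 2 * q 3 ^ 2 * q 4 ^ 4
        - q 2 * q 3 * q 4 ^ 3 * q 5 ^ 2 + q 3 ^ 2 * q 4 ^ 4 * q 5

/-- A contraction. -/
def sT14 (q : Fin 6 → ℝ) : ℝ :=
  6 * q 0 ^ 2 * q 4 ^ 3 + q 0 * q 2 ^ 2 * q 4 ^ 3 + 7 * q 0 * q 2 * q 4 ^ 3 * q 5
        + 6 * q 0 * q 3 * q 4 ^ 4 - 6 * q 0 * q 4 ^ 3 * q 5 ^ 2 - 9 * q 1 * q 2 * q 4 ^ 3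
        + 9 * q 1 * q 4 ^ 3 * q 5 + q 2 ^ 3 * q 4 ^ 3 * q 5 - q 2 ^ 2 * q 3 * q 4 ^ 4
        - q 2 * q 4 ^ 3 * q 5 ^ 3 + q 3 * q 4 ^ 4 * q 5 ^ 2

/-- A contraction. -/
def sT22 (q : Fin 6 → ℝ) : ℝ :=
  2 * q 0 ^ 2 * q 4 ^ 4 + 2 * q 0 * q 2 * q 4 ^ 4 * q 5 + 4 * q 0 * q 3 * q 4 ^ 5
        + 6 * q 0 * q 4 ^ 4 * q 5 ^ 2 - 6 * q 1 * q 2 * q 4 ^ 4 - 6 * q 1 * q 4 ^ 4 * q 5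
        + 2 * q 2 ^ 2 * q 4 ^ 4 * q 5 ^ 2 - 4 * q 2 * q 3 * q 4 ^ 5 * q 5
        + 2 * q 3 ^ 2 * q 4 ^ 6

/-- A contraction. -/
def sT23 (q : Fin 6 → ℝ) : ℝ :=
  4 * q 0 ^ 3 * q 4 ^ 2 + q 0 ^ 2 * q 2 ^ 2 * q 4 ^ 2
        + 8 * q 0 ^ 2 * q 2 * q 4 ^ 2 * q 5 + 10 * q 0 ^ 2 * q 3 * q 4 ^ 3
        - 8 * q 0 ^ 2 * q 4 ^ 2 * q 5 ^ 2 - 17 * q 0 * q 1 * q 2 * q 4 ^ 2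
        + 28 * q 0 * q 1 * q 4 ^ 2 * q 5 + 2 * q 0 * q 2 ^ 3 * q 4 ^ 2 * q 5
        + 2 * q 0 * q 2 ^ 2 * q 3 * q 4 ^ 3 + 2 * q 0 * q 2 ^ 2 * q 4 ^ 2 * q 5 ^ 2
        - 4 * q 0 * q 2 * q 3 * q 4 ^ 3 * q 5 - 8 * q 0 * q 2 * q 4 ^ 2 * q 5 ^ 3
        + 8 * q 0 * q 3 ^ 2 * q 4 ^ 4 + 14 * q 0 * q 3 * q 4 ^ 3 * q 5 ^ 2
        + 4 * q 0 * q 4 ^ 2 * q 5 ^ 4 - 18 * q 1 ^ 2 * q 4 ^ 2 - 4 * q 1 * q 2 ^ 3 * q 4 ^ 2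
        + 5 * q 1 * q 2 ^ 2 * q 4 ^ 2 * q 5 - 11 * q 1 * q 2 * q 3 * q 4 ^ 3
        + 5 * q 1 * q 2 * q 4 ^ 2 * q 5 ^ 2 - 11 * q 1 * q 3 * q 4 ^ 3 * q 5
        - 4 * q 1 * q 4 ^ 2 * q 5 ^ 3 + q 2 ^ 4 * q 4 ^ 2 * q 5 ^ 2
        - 2 * q 2 ^ 3 * q 3 * q 4 ^ 3 * q 5 - 2 * q 2 ^ 3 * q 4 ^ 2 * q 5 ^ 3
        + q 2 ^ 2 * q 3 ^ 2 * q 4 ^ 4 + 6 * q 2 ^ 2 * q 3 * q 4 ^ 3 * q 5 ^ 2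
        + q 2 ^ 2 * q 4 ^ 2 * q 5 ^ 4 - 6 * q 2 * q 3 ^ 2 * q 4 ^ 4 * q 5
        - 2 * q 2 * q 3 * q 4 ^ 3 * q 5 ^ 3 + 2 * q 3 ^ 3 * q 4 ^ 5
        + q 3 ^ 2 * q 4 ^ 4 * q 5 ^ 2

/-- A contraction. -/
def sT24 (q : Fin 6 → ℝ) : ℝ :=
  q 0 ^ 2 * q 2 * q 4 ^ 3 + 6 * q 0 ^ 2 * q 4 ^ 3 * q 5 - 9 * q 0 * q 1 * q 4 ^ 3
        + 3 * q 0 * q 2 ^ 2 * q 4 ^ 3 * q 5 + 3 * q 0 * q 2 * q 3 * q 4 ^ 4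
        + 5 * q 0 * q 2 * q 4 ^ 3 * q 5 ^ 2 - 5 * q 0 * q 3 * q 4 ^ 4 * q 5
        - 6 * q 0 * q 4 ^ 3 * q 5 ^ 3 - 6 * q 1 * q 2 ^ 2 * q 4 ^ 3
        + 6 * q 1 * q 4 ^ 3 * q 5 ^ 2 + 2 * q 2 ^ 3 * q 4 ^ 3 * q 5 ^ 2
        - 4 * q 2 ^ 2 * q 3 * q 4 ^ 4 * q 5 - 2 * q 2 ^ 2 * q 4 ^ 3 * q 5 ^ 3
        + 2 * q 2 * q 3 ^ 2 * q 4 ^ 5 + 4 * q 2 * q 3 * q 4 ^ 4 * q 5 ^ 2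
        - 2 * q 3 ^ 2 * q 4 ^ 5 * q 5

/-- A contraction. -/
def sT33 (q : Fin 6 → ℝ) : ℝ :=
  2 * q 0 ^ 2 * q 3 ^ 2 * q 4 ^ 2 + 6 * q 0 * q 1 ^ 2 - 2 * q 0 * q 1 * q 2 * q 3 * q 4
        + 16 * q 0 * q 1 * q 3 * q 4 * q 5 + 2 * q 0 * q 2 * q 3 ^ 2 * q 4 ^ 2 * q 5
        + 4 * q 0 * q 3 ^ 3 * q 4 ^ 3 + 6 * q 0 * q 3 ^ 2 * q 4 ^ 2 * q 5 ^ 2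
        + 2 * q 1 ^ 2 * q 2 ^ 2 - 2 * q 1 ^ 2 * q 2 * q 5 - 12 * q 1 ^ 2 * q 3 * q 4
        + 2 * q 1 ^ 2 * q 5 ^ 2 + 2 * q 1 * q 2 ^ 2 * q 3 * q 4 * q 5
        - 8 * q 1 * q 2 * q 3 ^ 2 * q 4 ^ 2 + 2 * q 1 * q 2 * q 3 * q 4 * q 5 ^ 2
        - 8 * q 1 * q 3 ^ 2 * q 4 ^ 2 * q 5 + 2 * q 2 ^ 2 * q 3 ^ 2 * q 4 ^ 2 * q 5 ^ 2
        - 4 * q 2 * q 3 ^ 3 * q 4 ^ 3 * q 5 + 2 * q 3 ^ 4 * q 4 ^ 4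

/-- A contraction. -/
def sT34 (q : Fin 6 → ℝ) : ℝ :=
  -6 * q 0 ^ 2 * q 1 * q 4 - q 0 ^ 2 * q 2 * q 3 * q 4 ^ 2
        - 6 * q 0 ^ 2 * q 3 * q 4 ^ 2 * q 5 - q 0 * q 1 * q 2 ^ 2 * q 4
        - 7 * q 0 * q 1 * q 2 * q 4 * q 5 + 3 * q 0 * q 1 * q 3 * q 4 ^ 2
        + 6 * q 0 * q 1 * q 4 * q 5 ^ 2 - 3 * q 0 * q 2 ^ 2 * q 3 * q 4 ^ 2 * q 5
        - 3 * q 0 * q 2 * q 3 ^ 2 * q 4 ^ 3 - 5 * q 0 * q 2 * q 3 * q 4 ^ 2 * q 5 ^ 2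
        + 5 * q 0 * q 3 ^ 2 * q 4 ^ 3 * q 5 + 6 * q 0 * q 3 * q 4 ^ 2 * q 5 ^ 3
        + 9 * q 1 ^ 2 * q 2 * q 4 - 9 * q 1 ^ 2 * q 4 * q 5 - q 1 * q 2 ^ 3 * q 4 * q 5
        + 7 * q 1 * q 2 ^ 2 * q 3 * q 4 ^ 2 + q 1 * q 2 * q 4 * q 5 ^ 3
        - 7 * q 1 * q 3 * q 4 ^ 2 * q 5 ^ 2 - 2 * q 2 ^ 3 * q 3 * q 4 ^ 2 * q 5 ^ 2
        + 4 * q 2 ^ 2 * q 3 ^ 2 * q 4 ^ 3 * q 5 + 2 * q 2 ^ 2 * q 3 * q 4 ^ 2 * q 5 ^ 3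
        - 2 * q 2 * q 3 ^ 3 * q 4 ^ 4 - 4 * q 2 * q 3 ^ 2 * q 4 ^ 3 * q 5 ^ 2
        + 2 * q 3 ^ 3 * q 4 ^ 4 * q 5

/-- A contraction. -/
def sT44 (q : Fin 6 → ℝ) : ℝ :=
  -2 * q 0 ^ 3 * q 4 ^ 2 - 4 * q 0 ^ 2 * q 2 * q 4 ^ 2 * q 5
        - 18 * q 0 ^ 2 * q 3 * q 4 ^ 3 + 4 * q 0 ^ 2 * q 4 ^ 2 * q 5 ^ 2
        + 18 * q 0 * q 1 * q 2 * q 4 ^ 2 - 54 * q 0 * q 1 * q 4 ^ 2 * q 5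
        - 2 * q 0 * q 2 ^ 2 * q 3 * q 4 ^ 3 - 2 * q 0 * q 2 ^ 2 * q 4 ^ 2 * q 5 ^ 2
        - 4 * q 0 * q 2 * q 3 * q 4 ^ 3 * q 5 + 4 * q 0 * q 2 * q 4 ^ 2 * q 5 ^ 3
        - 24 * q 0 * q 3 ^ 2 * q 4 ^ 4 - 34 * q 0 * q 3 * q 4 ^ 3 * q 5 ^ 2
        - 2 * q 0 * q 4 ^ 2 * q 5 ^ 4 + 54 * q 1 ^ 2 * q 4 ^ 2 + 2 * q 1 * q 2 ^ 3 * q 4 ^ 2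
        - 6 * q 1 * q 2 ^ 2 * q 4 ^ 2 * q 5 + 36 * q 1 * q 2 * q 3 * q 4 ^ 3
        - 6 * q 1 * q 2 * q 4 ^ 2 * q 5 ^ 2 + 36 * q 1 * q 3 * q 4 ^ 3 * q 5
        + 2 * q 1 * q 4 ^ 2 * q 5 ^ 3 - 8 * q 2 ^ 2 * q 3 * q 4 ^ 3 * q 5 ^ 2
        + 16 * q 2 * q 3 ^ 2 * q 4 ^ 4 * q 5 - 8 * q 3 ^ 3 * q 4 ^ 5

/-- All contractions. -/
def sT (z : Fin 6 → ℝ) : Fin 5 → Fin 5 → ℝ :=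
  ![![sT00 z, sT01 z, sT02 z, sT03 z, sT04 z],
    ![sT01 z, sT11 z, sT12 z, sT13 z, sT14 z],
    ![sT02 z, sT12 z, sT22 z, sT23 z, sT24 z],
    ![sT03 z, sT13 z, sT23 z, sT33 z, sT34 z],
    ![sT04 z, sT14 z, sT24 z, sT34 z, sT44 z]]

/-- The matrix `G` acting on a vector. -/
def sMul (q w : Fin 6 → ℝ) : Fin 6 → ℝ :=
  ![2 * w 0 + q 2 * w 2 - q 4 * w 3 + 2 * q 3 * w 4,
    2 * q 4 * w 2 + (-q 2 + 2 * q 5) * w 4 - q 4 * w 5,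
    q 2 * w 0 + 2 * q 4 * w 1 - 2 * (q 0 + q 3 * q 4) * w 2 + q 4 * (q 2 - q 5) * w 3
      + (-q 1 + q 3 * (q 2 - q 5)) * w 4 + 2 * q 3 * q 4 * w 5,
    -q 4 * w 0 + q 4 * (q 2 - q 5) * w 2 + 2 * (q 4) ^ 2 * w 3
      + (-q 0 + q 2 * (-q 2 + 2 * q 5) - 2 * q 3 * q 4 - (q 5) ^ 2) * w 4
      + q 4 * (-q 2 + q 5) * w 5,
    2 * q 3 * w 0 + (-q 2 + 2 * q 5) * w 1 + (-q 1 + q 3 * (q 2 - q 5)) * w 2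
      + (-q 0 + q 2 * (-q 2 + 2 * q 5) - 2 * q 3 * q 4 - (q 5) ^ 2) * w 3
      + 2 * (q 3) ^ 2 * w 4 + (-q 1 + q 3 * (-q 2 + q 5)) * w 5,
    -q 4 * w 1 + 2 * q 3 * q 4 * w 2 + q 4 * (-q 2 + q 5) * w 3
      + (-q 1 + q 3 * (-q 2 + q 5)) * w 4 - 2 * q 3 * q 4 * w 5]

lemma sMul_eq (q w : Fin 6 → ℝ) : (G q).mulVec w = sMul q w := by
  funext i
  rw [Matrix.mulVec, dotProduct, Fin.sum_univ_six]
  fin_cases i <;> simp [G, sMul] <;> ring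

lemma sR_spec0 (q : Fin 6 → ℝ) (i : Fin 6) :
    sMul q (sR q 0) i = (sD q 0 * sdisc q) * sv q 0 i := by
  fin_cases i <;> simp [sMul, sR, sD, sv] <;>
    simp only [sdisc, sR00, sR01, sR02, sR03, sR04, sR05] <;> ring

lemma sR_spec1 (q : Fin 6 → ℝ) (i : Fin 6) :
    sMul q (sR q 1) i = (sD q 1 * sdisc q) * sv q 1 i := by
  fin_cases i <;> simp [sMul, sR, sD, sv] <;>
    simp only [sdisc, sR10, sR11, sR12, sR13, sR14, sR15] <;> ring

lemma sR_spec2 (q : Fin 6 → ℝ) (i : Fin 6) :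
    sMul q (sR q 2) i = (sD q 2 * sdisc q) * sv q 2 i := by
  fin_cases i <;> simp [sMul, sR, sD, sv] <;>
    simp only [sdisc, sR20, sR21, sR22, sR23, sR24, sR25] <;> ring

lemma sR_spec3 (q : Fin 6 → ℝ) (i : Fin 6) :
    sMul q (sR q 3) i = (sD q 3 * sdisc q) * sv q 3 i := by
  fin_cases i <;> simp [sMul, sR, sD, sv] <;>
    simp only [sdisc, sR30, sR31, sR32, sR33, sR34, sR35] <;> ring

lemma sR_spec4 (q : Fin 6 → ℝ) (i : Fin 6) :
    sMul q (sR q 4) i = (sD q 4 * sdisc q) * sv q 4 i := by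
  fin_cases i <;> simp [sMul, sR, sD, sv] <;>
    simp only [sdisc, sR40, sR41, sR42, sR43, sR44, sR45] <;> ring

lemma sR_spec (q : Fin 6 → ℝ) (a : Fin 5) :
    (G q).mulVec (sR q a) = (sD q a * sdisc q) • sv q a := by
  rw [sMul_eq]
  funext i
  rw [Pi.smul_apply, smul_eq_mul]
  fin_cases a
  · exact sR_spec0 q i
  · exact sR_spec1 q i
  · exact sR_spec2 q i
  · exact sR_spec3 q i
  · exact sR_spec4 q i

lemma s_raise (q : Fin 6 → ℝ) (hG : IsUnit (G q).det) (a : Fin 5) (s : Fin 6) :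
    sD q a * sdisc q * ∑ p, (G q)⁻¹ s p * sv q a p = sR q a s := by
  have h := congrArg (fun w => ((G q)⁻¹.mulVec w) s) (sR_spec q a)
  simp only [Matrix.mulVec_mulVec, Matrix.nonsing_inv_mul _ hG, Matrix.one_mulVec,
    Matrix.mulVec_smul, Pi.smul_apply, smul_eq_mul] at h
  rw [h]; rfl

lemma s_disc (u : Fin 6 → ℝ) (h4 : u 4 ≠ 0) :
    sdisc (phi u) = -((u 0 - u 1) * (u 0 - u 2) * (u 1 - u 2)) ^ 2 := by
  simp [sdisc, phi]
  field_simp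
  ring

/-- Modified coordinates. -/
def sz (q : Fin 6 → ℝ) : Fin 6 → ℝ := ![q 0, q 1 * q 4, q 2, q 3, q 4, q 5]

lemma sT_spec0 (q : Fin 6 → ℝ) (b : Fin 5) :
    (q 4) ^ 2 * ∑ s, sR q 0 s * sv q b s = sD q 0 * sT (sz q) 0 b := by
  rw [Fin.sum_univ_six]
  fin_cases b <;> simp [sR, sD, sv, sT] <;>
    simp [sz, sR00, sR01, sR02, sR03, sR04, sR05, sT00, sT01, sT02, sT03, sT04] <;> ring

lemma sT_spec1 (q : Fin 6 → ℝ) (b : Fin 5) :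
    (q 4) ^ 2 * ∑ s, sR q 1 s * sv q b s = sD q 1 * sT (sz q) 1 b := by
  rw [Fin.sum_univ_six]
  fin_cases b <;> simp [sR, sD, sv, sT] <;>
    simp [sz, sR10, sR11, sR12, sR13, sR14, sR15, sT01, sT11, sT12, sT13, sT14] <;> ring

lemma sT_spec2 (q : Fin 6 → ℝ) (b : Fin 5) :
    (q 4) ^ 2 * ∑ s, sR q 2 s * sv q b s = sD q 2 * sT (sz q) 2 b := by
  rw [Fin.sum_univ_six]
  fin_cases b <;> simp [sR, sD, sv, sT] <;>
    simp [sz, sR20, sR21, sR22, sR23, sR24, sR25, sT02, sT12, sT22, sT23, sT24] <;> ring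

lemma sT_spec3 (q : Fin 6 → ℝ) (b : Fin 5) :
    (q 4) ^ 2 * ∑ s, sR q 3 s * sv q b s = sD q 3 * sT (sz q) 3 b := by
  rw [Fin.sum_univ_six]
  fin_cases b <;> simp [sR, sD, sv, sT] <;>
    simp [sz, sR30, sR31, sR32, sR33, sR34, sR35, sT03, sT13, sT23, sT33, sT34] <;> ring

lemma sT_spec4 (q : Fin 6 → ℝ) (b : Fin 5) :
    (q 4) ^ 2 * ∑ s, sR q 4 s * sv q b s = sD q 4 * sT (sz q) 4 b := by
  rw [Fin.sum_univ_six]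
  fin_cases b <;> simp [sR, sD, sv, sT] <;>
    simp [sz, sR40, sR41, sR42, sR43, sR44, sR45, sT04, sT14, sT24, sT34, sT44] <;> ring

lemma sT_spec (q : Fin 6 → ℝ) (a b : Fin 5) :
    (q 4) ^ 2 * ∑ s, sR q a s * sv q b s = sD q a * sT (sz q) a b := by
  fin_cases a
  · exact sT_spec0 q b
  · exact sT_spec1 q b
  · exact sT_spec2 q b
  · exact sT_spec3 q b
  · exact sT_spec4 q b

/-- The modified coordinates as polynomials. -/
noncomputable def sy (x : Fin 6 → ℝ) : Fin 6 → ℝ :=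
  ![(1 / 4) * (x 0 + x 1 + x 2) ^ 2 - (x 0 * x 1 + x 0 * x 2 + x 1 * x 2)
      - (1 / 4) * (x 5) ^ 2 - x 3 * x 4,
    x 0 * x 1 * x 2 + (1 / 2) * (x 0 + x 1 + x 2 - x 5) *
      ((1 / 4) * (x 0 + x 1 + x 2) ^ 2 - (x 0 * x 1 + x 0 * x 2 + x 1 * x 2)
        - (1 / 4) * (x 5) ^ 2 - x 3 * x 4),
    (1 / 2) * (x 0 + x 1 + x 2 + x 5), x 3, x 4, (1 / 2) * (x 0 + x 1 + x 2 - x 5)]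

lemma sz_phi (u : Fin 6 → ℝ) (h4 : u 4 ≠ 0) : sz (phi u) = sy u := by
  funext i
  fin_cases i <;> simp [sz, phi, sy]
  field_simp

/-- The defect of the key identity. -/
noncomputable def sE (u : Fin 6 → ℝ) (a b : Fin 5) : ℝ :=
  sM a b * (Δ u) ^ 2 + 2 * sw1 u a * sw1 u b + sw1 u a * sw2 u b
      + sw2 u a * sw1 u b + 2 * sw2 u a * sw2 u b - sT (sy u) a b

lemma sE_symm (u : Fin 6 → ℝ) (a b : Fin 5) : sE u a b = sE u b a := by
  have h1 : sM a b = sM b a := by fin_cases a <;> fin_cases b <;> rfl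
  have h2 : sT (sy u) a b = sT (sy u) b a := by fin_cases a <;> fin_cases b <;> rfl
  unfold sE
  rw [h1, h2]; ring

lemma s_key00 (u : Fin 6 → ℝ) : sE u 0 0 = 0 := by
  simp [sE, sM, Δ, sw1, sw2, sT]
  simp [sT00, sy]
  generalize u 0 = a, u 1 = b, u 2 = c, u 3 = d, u 4 = e, u 5 = g
  obtain ⟨f, rfl⟩ : ∃ f, g = a + b + c - 2 * f := ⟨(a + b + c - g) / 2, by ring⟩
  obtain ⟨x, rfl⟩ : ∃ x, a = x + f := ⟨a - f, by ring⟩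
  obtain ⟨y, rfl⟩ : ∃ y, b = y + f := ⟨b - f, by ring⟩
  obtain ⟨z, rfl⟩ : ∃ z, c = z + f := ⟨c - f, by ring⟩
  ring

lemma s_key01 (u : Fin 6 → ℝ) : sE u 0 1 = 0 := by
  simp [sE, sM, Δ, sw1, sw2, sT]
  simp [sT01, sy]
  generalize u 0 = a, u 1 = b, u 2 = c, u 3 = d, u 4 = e, u 5 = g
  obtain ⟨f, rfl⟩ : ∃ f, g = a + b + c - 2 * f := ⟨(a + b + c - g) / 2, by ring⟩
  obtain ⟨x, rfl⟩ : ∃ x, a = x + f := ⟨a - f, by ring⟩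
  obtain ⟨y, rfl⟩ : ∃ y, b = y + f := ⟨b - f, by ring⟩
  obtain ⟨z, rfl⟩ : ∃ z, c = z + f := ⟨c - f, by ring⟩
  ring

lemma s_key02 (u : Fin 6 → ℝ) : sE u 0 2 = 0 := by
  simp [sE, sM, Δ, sw1, sw2, sT]
  simp [sT02, sy]
  generalize u 0 = a, u 1 = b, u 2 = c, u 3 = d, u 4 = e, u 5 = g
  obtain ⟨f, rfl⟩ : ∃ f, g = a + b + c - 2 * f := ⟨(a + b + c - g) / 2, by ring⟩
  obtain ⟨x, rfl⟩ : ∃ x, a = x + f := ⟨a - f, by ring⟩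
  obtain ⟨y, rfl⟩ : ∃ y, b = y + f := ⟨b - f, by ring⟩
  obtain ⟨z, rfl⟩ : ∃ z, c = z + f := ⟨c - f, by ring⟩
  ring

lemma s_key03 (u : Fin 6 → ℝ) : sE u 0 3 = 0 := by
  simp [sE, sM, Δ, sw1, sw2, sT]
  simp [sT03, sy]
  generalize u 0 = a, u 1 = b, u 2 = c, u 3 = d, u 4 = e, u 5 = g
  obtain ⟨f, rfl⟩ : ∃ f, g = a + b + c - 2 * f := ⟨(a + b + c - g) / 2, by ring⟩
  obtain ⟨x, rfl⟩ : ∃ x, a = x + f := ⟨a - f, by ring⟩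
  obtain ⟨y, rfl⟩ : ∃ y, b = y + f := ⟨b - f, by ring⟩
  obtain ⟨z, rfl⟩ : ∃ z, c = z + f := ⟨c - f, by ring⟩
  ring

lemma s_key04 (u : Fin 6 → ℝ) : sE u 0 4 = 0 := by
  simp [sE, sM, Δ, sw1, sw2, sT]
  simp [sT04, sy]
  generalize u 0 = a, u 1 = b, u 2 = c, u 3 = d, u 4 = e, u 5 = g
  obtain ⟨f, rfl⟩ : ∃ f, g = a + b + c - 2 * f := ⟨(a + b + c - g) / 2, by ring⟩
  obtain ⟨x, rfl⟩ : ∃ x, a = x + f := ⟨a - f, by ring⟩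
  obtain ⟨y, rfl⟩ : ∃ y, b = y + f := ⟨b - f, by ring⟩
  obtain ⟨z, rfl⟩ : ∃ z, c = z + f := ⟨c - f, by ring⟩
  ring

lemma s_key11 (u : Fin 6 → ℝ) : sE u 1 1 = 0 := by
  simp [sE, sM, Δ, sw1, sw2, sT]
  simp [sT11, sy]
  generalize u 0 = a, u 1 = b, u 2 = c, u 3 = d, u 4 = e, u 5 = g
  obtain ⟨f, rfl⟩ : ∃ f, g = a + b + c - 2 * f := ⟨(a + b + c - g) / 2, by ring⟩
  obtain ⟨x, rfl⟩ : ∃ x, a = x + f := ⟨a - f, by ring⟩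
  obtain ⟨y, rfl⟩ : ∃ y, b = y + f := ⟨b - f, by ring⟩
  obtain ⟨z, rfl⟩ : ∃ z, c = z + f := ⟨c - f, by ring⟩
  ring

lemma s_key12 (u : Fin 6 → ℝ) : sE u 1 2 = 0 := by
  simp [sE, sM, Δ, sw1, sw2, sT]
  simp [sT12, sy]
  generalize u 0 = a, u 1 = b, u 2 = c, u 3 = d, u 4 = e, u 5 = g
  obtain ⟨f, rfl⟩ : ∃ f, g = a + b + c - 2 * f := ⟨(a + b + c - g) / 2, by ring⟩
  obtain ⟨x, rfl⟩ : ∃ x, a = x + f := ⟨a - f, by ring⟩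
  obtain ⟨y, rfl⟩ : ∃ y, b = y + f := ⟨b - f, by ring⟩
  obtain ⟨z, rfl⟩ : ∃ z, c = z + f := ⟨c - f, by ring⟩
  ring

lemma s_key13 (u : Fin 6 → ℝ) : sE u 1 3 = 0 := by
  simp [sE, sM, Δ, sw1, sw2, sT]
  simp [sT13, sy]
  generalize u 0 = a, u 1 = b, u 2 = c, u 3 = d, u 4 = e, u 5 = g
  obtain ⟨f, rfl⟩ : ∃ f, g = a + b + c - 2 * f := ⟨(a + b + c - g) / 2, by ring⟩
  obtain ⟨x, rfl⟩ : ∃ x, a = x + f := ⟨a - f, by ring⟩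
  obtain ⟨y, rfl⟩ : ∃ y, b = y + f := ⟨b - f, by ring⟩
  obtain ⟨z, rfl⟩ : ∃ z, c = z + f := ⟨c - f, by ring⟩
  ring

lemma s_key14 (u : Fin 6 → ℝ) : sE u 1 4 = 0 := by
  simp [sE, sM, Δ, sw1, sw2, sT]
  simp [sT14, sy]
  generalize u 0 = a, u 1 = b, u 2 = c, u 3 = d, u 4 = e, u 5 = g
  obtain ⟨f, rfl⟩ : ∃ f, g = a + b + c - 2 * f := ⟨(a + b + c - g) / 2, by ring⟩
  obtain ⟨x, rfl⟩ : ∃ x, a = x + f := ⟨a - f, by ring⟩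
  obtain ⟨y, rfl⟩ : ∃ y, b = y + f := ⟨b - f, by ring⟩
  obtain ⟨z, rfl⟩ : ∃ z, c = z + f := ⟨c - f, by ring⟩
  ring

lemma s_key22 (u : Fin 6 → ℝ) : sE u 2 2 = 0 := by
  simp [sE, sM, Δ, sw1, sw2, sT]
  simp [sT22, sy]
  generalize u 0 = a, u 1 = b, u 2 = c, u 3 = d, u 4 = e, u 5 = g
  obtain ⟨f, rfl⟩ : ∃ f, g = a + b + c - 2 * f := ⟨(a + b + c - g) / 2, by ring⟩
  obtain ⟨x, rfl⟩ : ∃ x, a = x + f := ⟨a - f, by ring⟩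
  obtain ⟨y, rfl⟩ : ∃ y, b = y + f := ⟨b - f, by ring⟩
  obtain ⟨z, rfl⟩ : ∃ z, c = z + f := ⟨c - f, by ring⟩
  ring

lemma s_key23 (u : Fin 6 → ℝ) : sE u 2 3 = 0 := by
  simp [sE, sM, Δ, sw1, sw2, sT]
  simp [sT23, sy]
  generalize u 0 = a, u 1 = b, u 2 = c, u 3 = d, u 4 = e, u 5 = g
  obtain ⟨f, rfl⟩ : ∃ f, g = a + b + c - 2 * f := ⟨(a + b + c - g) / 2, by ring⟩
  obtain ⟨x, rfl⟩ : ∃ x, a = x + f := ⟨a - f, by ring⟩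
  obtain ⟨y, rfl⟩ : ∃ y, b = y + f := ⟨b - f, by ring⟩
  obtain ⟨z, rfl⟩ : ∃ z, c = z + f := ⟨c - f, by ring⟩
  ring

lemma s_key24 (u : Fin 6 → ℝ) : sE u 2 4 = 0 := by
  simp [sE, sM, Δ, sw1, sw2, sT]
  simp [sT24, sy]
  generalize u 0 = a, u 1 = b, u 2 = c, u 3 = d, u 4 = e, u 5 = g
  obtain ⟨f, rfl⟩ : ∃ f, g = a + b + c - 2 * f := ⟨(a + b + c - g) / 2, by ring⟩
  obtain ⟨x, rfl⟩ : ∃ x, a = x + f := ⟨a - f, by ring⟩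
  obtain ⟨y, rfl⟩ : ∃ y, b = y + f := ⟨b - f, by ring⟩
  obtain ⟨z, rfl⟩ : ∃ z, c = z + f := ⟨c - f, by ring⟩
  ring

lemma s_key33 (u : Fin 6 → ℝ) : sE u 3 3 = 0 := by
  simp [sE, sM, Δ, sw1, sw2, sT]
  simp [sT33, sy]
  generalize u 0 = a, u 1 = b, u 2 = c, u 3 = d, u 4 = e, u 5 = g
  obtain ⟨f, rfl⟩ : ∃ f, g = a + b + c - 2 * f := ⟨(a + b + c - g) / 2, by ring⟩
  obtain ⟨x, rfl⟩ : ∃ x, a = x + f := ⟨a - f, by ring⟩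
  obtain ⟨y, rfl⟩ : ∃ y, b = y + f := ⟨b - f, by ring⟩
  obtain ⟨z, rfl⟩ : ∃ z, c = z + f := ⟨c - f, by ring⟩
  ring

lemma s_key34 (u : Fin 6 → ℝ) : sE u 3 4 = 0 := by
  simp [sE, sM, Δ, sw1, sw2, sT]
  simp [sT34, sy]
  generalize u 0 = a, u 1 = b, u 2 = c, u 3 = d, u 4 = e, u 5 = g
  obtain ⟨f, rfl⟩ : ∃ f, g = a + b + c - 2 * f := ⟨(a + b + c - g) / 2, by ring⟩
  obtain ⟨x, rfl⟩ : ∃ x, a = x + f := ⟨a - f, by ring⟩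
  obtain ⟨y, rfl⟩ : ∃ y, b = y + f := ⟨b - f, by ring⟩
  obtain ⟨z, rfl⟩ : ∃ z, c = z + f := ⟨c - f, by ring⟩
  ring

lemma s_key44 (u : Fin 6 → ℝ) : sE u 4 4 = 0 := by
  simp [sE, sM, Δ, sw1, sw2, sT]
  simp [sT44, sy]
  generalize u 0 = a, u 1 = b, u 2 = c, u 3 = d, u 4 = e, u 5 = g
  obtain ⟨f, rfl⟩ : ∃ f, g = a + b + c - 2 * f := ⟨(a + b + c - g) / 2, by ring⟩
  obtain ⟨x, rfl⟩ : ∃ x, a = x + f := ⟨a - f, by ring⟩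
  obtain ⟨y, rfl⟩ : ∃ y, b = y + f := ⟨b - f, by ring⟩
  obtain ⟨z, rfl⟩ : ∃ z, c = z + f := ⟨c - f, by ring⟩
  ring

lemma sE_zero (u : Fin 6 → ℝ) (a b : Fin 5) : sE u a b = 0 := by
  wlog hab : a ≤ b generalizing a b
  · rw [sE_symm]; exact this b a (le_of_not_ge hab)
  fin_cases a <;> fin_cases b <;> first
    | exact absurd hab (by decide)
    | clear hab
  · exact s_key00 u
  · exact s_key01 u
  · exact s_key02 u
  · exact s_key03 u
  · exact s_key04 u
  · exact s_key11 u
  · exact s_key12 u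
  · exact s_key13 u
  · exact s_key14 u
  · exact s_key22 u
  · exact s_key23 u
  · exact s_key24 u
  · exact s_key33 u
  · exact s_key34 u
  · exact s_key44 u

lemma s_key (u : Fin 6 → ℝ) (h4 : u 4 ≠ 0) (a b : Fin 5) :
    sD (phi u) a * (sM a b * (Δ u) ^ 2 + 2 * sw1 u a * sw1 u b + sw1 u a * sw2 u b
      + sw2 u a * sw1 u b + 2 * sw2 u a * sw2 u b)
      = (u 4) ^ 2 * ∑ s, sR (phi u) a s * sv (phi u) b s := by
  have h := sT_spec (phi u) a b
  rw [sz_phi u h4, show phi u 4 = u 4 from rfl] at h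
  have h2 := sE_zero u a b
  unfold sE at h2
  rw [h]
  linear_combination sD (phi u) a * h2


/-- the integrability condition with nonlocal tail for the Monge metric of
the Oriented Associativity equation: `c_{nml,k} + c^s_{ml}c_{snk} + c^α w_{αml}w_{αnk} = 0`
with constants `c¹ = 2, c² = 1, c³ = 2`, where `w_{αij} = W_{αij}/Δ` and everything is
evaluated at `q = φ(u)`. This proves that the equation admits the nonlocal third-order
homogeneous Hamiltonian operator of the paper. -/
theorem statement15 :
    ∀ u : Fin 6 → ℝ,
      (u 0 ≠ u 1 ∧ u 0 ≠ u 2 ∧ u 1 ≠ u 2) → u 4 ≠ 0 →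
      IsUnit (G (phi u)).det →
      ∀ n m l k : Fin 6,
        pd k (fun x => cLow n m l x) (phi u)
          + ∑ s, (∑ p, (G (phi u))⁻¹ s p * cLow p m l (phi u)) * cLow s n k (phi u)
          + 2 * (W1 u m l / Δ u) * (W1 u n k / Δ u)
          + (W1 u m l / Δ u) * (W2 u n k / Δ u)
          + (W2 u m l / Δ u) * (W1 u n k / Δ u)
          + 2 * (W2 u m l / Δ u) * (W2 u n k / Δ u) = 0 := by
  intro u hu h4 hG n m l k
  obtain ⟨h01, h02, h12⟩ := hu
  have hP : (u 0 - u 1) * (u 0 - u 2) * (u 1 - u 2) ≠ 0 :=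
    mul_ne_zero (mul_ne_zero (sub_ne_zero.2 h01) (sub_ne_zero.2 h02)) (sub_ne_zero.2 h12)
  have hΔ : Δ u ≠ 0 := mul_ne_zero hP h4
  have hΔ2 : (Δ u) ^ 2 = - sdisc (phi u) * (u 4) ^ 2 := by
    rw [s_disc u h4, Δ]; ring
  have hdisc : sdisc (phi u) ≠ 0 := by
    rw [s_disc u h4]; exact neg_ne_zero.2 (pow_ne_zero 2 hP)
  have hD : ∀ a, sD (phi u) a ≠ 0 := by
    intro a
    fin_cases a <;> simp [sD, phi, h4]
  set r : Fin 5 → Fin 6 → ℝ := fun a s => ∑ p, (G (phi u))⁻¹ s p * sv (phi u) a p with hr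
  have key : ∀ a b, sM a b + ∑ s, r a s * sv (phi u) b s
      + 2 * (sw1 u a / Δ u) * (sw1 u b / Δ u) + (sw1 u a / Δ u) * (sw2 u b / Δ u)
      + (sw2 u a / Δ u) * (sw1 u b / Δ u) + 2 * (sw2 u a / Δ u) * (sw2 u b / Δ u) = 0 := by
    intro a b
    have h1 := s_key u h4 a b
    have h2 : ∑ s, sR (phi u) a s * sv (phi u) b s
        = sD (phi u) a * sdisc (phi u) * ∑ s, r a s * sv (phi u) b s := by
      rw [Finset.mul_sum]
      refine Finset.sum_congr rfl fun s _ => ?_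
      rw [← s_raise (phi u) hG a s]; ring
    rw [h2] at h1
    generalize ∑ s, r a s * sv (phi u) b s = K at h1 ⊢
    have h3 : sM a b * (Δ u) ^ 2 + 2 * sw1 u a * sw1 u b + sw1 u a * sw2 u b
      + sw2 u a * sw1 u b + 2 * sw2 u a * sw2 u b + (Δ u) ^ 2 * K = 0 := by
      apply mul_left_cancel₀ (hD a)
      linear_combination h1 + sD (phi u) a * K * hΔ2
    field_simp
    linear_combination h3
  have e1 : ∀ s, (∑ p, (G (phi u))⁻¹ s p * cLow p m l (phi u)) = ∑ a, sN a m l * r a s := by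
    intro s
    simp only [hr, s_cLow, Finset.mul_sum]
    rw [Finset.sum_comm]
    exact Finset.sum_congr rfl fun a _ => Finset.sum_congr rfl fun p _ => by ring
  have e2 : ∑ s, (∑ p, (G (phi u))⁻¹ s p * cLow p m l (phi u)) * cLow s n k (phi u)
      = ∑ a, ∑ b, sN a m l * sN b n k * ∑ s, r a s * sv (phi u) b s := by
    simp only [e1]
    simp only [s_cLow]
    simp only [Finset.sum_mul_sum]
    simp only [Finset.mul_sum]
    rw [Finset.sum_comm]
    refine Finset.sum_congr rfl fun a _ => ?_
    rw [Finset.sum_comm]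
    exact Finset.sum_congr rfl fun b _ => Finset.sum_congr rfl fun s _ => by ring
  have e3 : ∀ (c d : ℝ) (x y : Fin 5 → ℝ),
      c * ((∑ a, sN a m l * x a) / d) * ((∑ b, sN b n k * y b) / d)
      = ∑ a, ∑ b, sN a m l * sN b n k * (c * (x a / d) * (y b / d)) := by
    intro c d x y
    rw [Finset.sum_div, Finset.sum_div, mul_assoc, Finset.sum_mul_sum, Finset.mul_sum]
    simp only [Finset.mul_sum]
    exact Finset.sum_congr rfl fun a _ => Finset.sum_congr rfl fun b _ => by ring
  rw [e2, s_cLow_pd, sW1, sW1, sW2, sW2]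
  have e4 := e3 1
  simp only [one_mul] at e4
  rw [e3, e4, e4, e3]
  simp only [← Finset.sum_add_distrib, ← mul_add]
  exact Finset.sum_eq_zero fun a _ => Finset.sum_eq_zero fun b _ => by rw [key a b, mul_zero]
end
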